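/- Suppose μ is a T-ergodic Borel probability measure on Ω that has a local product structure and full support (supp μ = Ω). Suppose there are two distinct letters j₀ ≠ j₁ in 𝒜 such that each of the two-letter words (j₀,j₀), (j₀,j₁), and (j₁,j₀) occurs in at least one element of Ω. Then L(A^{(k)}, μ) > 0 for every k ∈ (0,π) with k ≠ π/2; equivalently, the set {k ∈ [0,π] : L(A^{(k)}, μ) = 0} is contained in {0, π/2, π}. -/

import Mathlib

open Real MeasureTheory Filter Topology Matrix Set

noncomputable section

/-- The left shift on bi-infinite sequences: `(Tω)_n = ω_{n+1}`. -/
def shift (ω : ℤ → ℕ) : ℤ → ℕ := fun n => ω (n + 1)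

/-- The subshift of finite type: sequences with letters in `{1,…,ℓ}` and all
transitions `(ω_n, ω_{n+1})` in the allowed set `W`. -/
def SFT (ℓ : ℕ) (W : Set (ℕ × ℕ)) : Set (ℤ → ℕ) :=
  {ω | (∀ n, 1 ≤ ω n ∧ ω n ≤ ℓ) ∧ ∀ n, (ω n, ω (n + 1)) ∈ W}

/-- The cocycle matrix
`A^{(k)}(ω) = √(ω₀/ω₋₁)·[[((ω₀+ω₋₁)/ω₀)·cos k, −ω₋₁/ω₀],[1, 0]]`. -/
def Acoc (k : ℝ) (ω : ℤ → ℕ) : Matrix (Fin 2) (Fin 2) ℝ :=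
  Real.sqrt ((ω 0 : ℝ) / (ω (-1) : ℝ)) •
    !![((ω 0 : ℝ) + (ω (-1) : ℝ)) / (ω 0 : ℝ) * Real.cos k, -((ω (-1) : ℝ) / (ω 0 : ℝ));
       (1 : ℝ), 0]

/-- The iterated cocycle `A_n(ω) = A^{(k)}(T^{n−1}ω)⋯A^{(k)}(ω)` for `n ≥ 0`,
with `A_0(ω) = Id`. -/
def AIter (k : ℝ) (ω : ℤ → ℕ) : ℕ → Matrix (Fin 2) (Fin 2) ℝ
  | 0 => 1
  | n + 1 => Acoc k (shift^[n] ω) * AIter k ω n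

end

/-- We endow 2×2 real matrices with the `L²` operator norm. -/
noncomputable instance : NormedAddCommGroup (Matrix (Fin 2) (Fin 2) ℝ) :=
  Matrix.instL2OpNormedAddCommGroup

/-- Projection onto nonnegative coordinates: `π₊ω = (ω_n)_{n≥0}`. -/
def projPlus (ω : ℤ → ℕ) : ℕ → ℕ := fun n => ω (n : ℤ)

/-- Projection onto nonpositive coordinates: `π₋ω = (ω_{−n})_{n≥0}`. -/
def projMinus (ω : ℤ → ℕ) : ℕ → ℕ := fun n => ω (-(n : ℤ))

/-- The map `P(ω) = (π₋ω, π₊ω)`; on each cylinder `[0;j]` this is the map `P_j`. -/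
def pairProj (ω : ℤ → ℕ) : (ℕ → ℕ) × (ℕ → ℕ) := (projMinus ω, projPlus ω)

/-- `μ` has a local product structure: there is a positive function `ψ` on `Ω`
(written as `ψ ∘ P` for a function on `Ω₋ × Ω₊`) such that for each letter `j`,
`ψ∘P_j⁻¹` is integrable with respect to `μ_j^− × μ_j^+` and
`(P_j)_* μ_j = (ψ∘P_j⁻¹) d(μ_j^− × μ_j^+)`. -/
def LocalProductStructure (ℓ : ℕ) (W : Set (ℕ × ℕ)) (μ : Measure (ℤ → ℕ)) : Prop :=
  ∃ ψ : (ℕ → ℕ) × (ℕ → ℕ) → ℝ,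
    (∀ ω ∈ SFT ℓ W, 0 < ψ (pairProj ω)) ∧
    ∀ j : ℕ, 1 ≤ j → j ≤ ℓ →
      MeasureTheory.Integrable ψ
        (((Measure.map projMinus μ).restrict {a | a 0 = j}).prod
          ((Measure.map projPlus μ).restrict {a | a 0 = j})) ∧
      Measure.map pairProj (μ.restrict {ω | ω 0 = j}) =
        (((Measure.map projMinus μ).restrict {a | a 0 = j}).prod
          ((Measure.map projPlus μ).restrict {a | a 0 = j})).withDensity
          (fun x => ENNReal.ofReal (ψ x))

/-- `supp μ = Ω`: every open set meeting `Ω` has positive measure. -/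
def FullSupport (ℓ : ℕ) (W : Set (ℕ × ℕ)) (μ : Measure (ℤ → ℕ)) : Prop :=
  ∀ U : Set (ℤ → ℕ), IsOpen U → (U ∩ SFT ℓ W).Nonempty → 0 < μ U

/-! Suppose the exponent is nonpositive. Average a bounded function `f` on the plane over the images
of a fixed heavy-tailed measure under the matrix products along the past of `ω`. The weak limits of
the Cesàro means of these averages depend on the past only, by construction. They also depend on
the future only, by an entropy form of the invariance principle: if `d` has zero expectation given
the future and `|d * f| ≤ δ`, then `∏ (1 + d (T^m ω) * f)` is a reverse martingale product of mean
`1`, and Gibbs' inequality with this test function bounds the correlation of the weak limit with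
`d` by three times the exponent plus `2 * δ ^ 2`; replacing `d` by `t * d` and letting `t → 0` shows
that the correlation is nonpositive. By the local product structure, a function of the past that is
also a function of the future is constant on each cylinder `[0; j]`.

So each letter carries a mean on the plane, and the transition matrices carry these means to each
other. The mean of `j₀` is invariant under the transition matrix of `(j₀, j₀)`, which is conjugate
to the rotation by `k`, and under the product over the cycle `j₀ → j₁ → j₀`. As `sin (2 * k) ≠ 0`,
the first two harmonics of the doubled angle have mean zero in the coordinates of the rotation. The
expected stretch of the cycle matrix then equals that of its inverse, and since the two stretches
are pointwise inverse to each other, the matrix must be orthogonal. Hence it commutes with the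
rotation, which forces `j₀ = j₁`. -/

/-- `f` is bounded and measurable. Such functions are the test functions of every average below. -/
@[fun_prop]
structure BddMeas {α : Type*} [MeasurableSpace α] (f : α → ℝ) : Prop where
  measurable : Measurable f
  bounded : ∃ C, ∀ x, |f x| ≤ C

namespace BddMeas

variable {α β ι : Type*} [MeasurableSpace α] [MeasurableSpace β] {f g : α → ℝ}

@[fun_prop]
lemma const (c : ℝ) : BddMeas (fun _ : α => c) := ⟨measurable_const, |c|, fun _ => le_rfl⟩

@[fun_prop]
lemma add (hf : BddMeas f) (hg : BddMeas g) : BddMeas (fun x => f x + g x) := by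
  obtain ⟨C, hC⟩ := hf.bounded
  obtain ⟨D, hD⟩ := hg.bounded
  exact ⟨hf.measurable.add hg.measurable, C + D,
    fun x => (abs_add_le _ _).trans (add_le_add (hC x) (hD x))⟩

@[fun_prop]
lemma mul (hf : BddMeas f) (hg : BddMeas g) : BddMeas (fun x => f x * g x) := by
  obtain ⟨C, hC⟩ := hf.bounded
  obtain ⟨D, hD⟩ := hg.bounded
  refine ⟨hf.measurable.mul hg.measurable, C * D, fun x => ?_⟩
  rw [abs_mul]
  exact mul_le_mul (hC x) (hD x) (abs_nonneg _) ((abs_nonneg _).trans (hC x))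

@[fun_prop]
lemma sub (hf : BddMeas f) (hg : BddMeas g) : BddMeas (fun x => f x - g x) := by
  simpa only [neg_one_mul, ← sub_eq_add_neg] using hf.add ((const (-1)).mul hg)

@[fun_prop]
lemma pow (hf : BddMeas f) (n : ℕ) : BddMeas (fun x => f x ^ n) := by
  induction n with
  | zero => simpa only [pow_zero] using const 1
  | succ n ih => simpa only [pow_succ] using ih.mul hf

@[fun_prop]
lemma sum {f : ι → α → ℝ} (s : Finset ι) (hf : ∀ i, BddMeas (f i)) :
    BddMeas (fun x => ∑ i ∈ s, f i x) := by
  classical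
  induction s using Finset.induction_on with
  | empty => simpa only [Finset.sum_empty] using const 0
  | insert a s ha ih => simpa only [Finset.sum_insert ha] using (hf a).add ih

@[fun_prop]
lemma prod {f : ι → α → ℝ} (s : Finset ι) (hf : ∀ i, BddMeas (f i)) :
    BddMeas (fun x => ∏ i ∈ s, f i x) := by
  classical
  induction s using Finset.induction_on with
  | empty => simpa only [Finset.prod_empty] using const 1
  | insert a s ha ih => simpa only [Finset.prod_insert ha] using (hf a).mul ih

@[fun_prop]
lemma comp {h : β → α} (hf : BddMeas f) (hh : Measurable h) : BddMeas (fun x => f (h x)) :=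
  ⟨hf.measurable.comp hh, hf.bounded.imp fun _ hC _ => hC _⟩

lemma log (hf : BddMeas f) {ε : ℝ} (hε : 0 < ε) (hfε : ∀ x, ε ≤ f x) :
    BddMeas (fun x => Real.log (f x)) := by
  obtain ⟨C, hC⟩ := hf.bounded
  exact ⟨measurable_log.comp hf.measurable, max |Real.log ε| |Real.log C|, fun x =>
    abs_le_max_abs_abs (log_le_log hε (hfε x))
      (log_le_log (hε.trans_le (hfε x)) ((le_abs_self _).trans (hC x)))⟩

lemma integrable (hf : BddMeas f) (μ : Measure α) [IsFiniteMeasure μ] : Integrable f μ :=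
  let ⟨C, hC⟩ := hf.bounded
  .of_bound hf.measurable.aestronglyMeasurable C (ae_of_all _ hC)

lemma memLp (hf : BddMeas f) (p : ENNReal) (μ : Measure α) [IsFiniteMeasure μ] : MemLp f p μ :=
  let ⟨C, hC⟩ := hf.bounded
  .of_bound hf.measurable.aestronglyMeasurable C (ae_of_all _ hC)

lemma indicator_one {s : Set α} (hs : MeasurableSet s) : BddMeas (s.indicator (1 : α → ℝ)) :=
  ⟨measurable_const.indicator hs, 1, fun x => by by_cases hx : x ∈ s <;> simp [hx]⟩

lemma clamp (hf : Measurable f) (C : ℝ) : BddMeas (fun x => max (-C) (min C (f x))) :=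
  ⟨measurable_const.max (measurable_const.min hf), |C|, fun _ => abs_le.2
    ⟨(neg_le_neg (le_abs_self C)).trans (le_max_left _ _),
      max_le (neg_le_abs C) ((min_le_left _ _).trans (le_abs_self C))⟩⟩

end BddMeas

lemma max_neg_min_eq_self {C x : ℝ} (hx : |x| ≤ C) : max (-C) (min C x) = x := by
  rw [min_eq_right (abs_le.1 hx).2, max_eq_right (abs_le.1 hx).1]

section WeakLimit

lemma exists_tendsto_inner_of_norm_le {H ι : Type*} [NormedAddCommGroup H] [InnerProductSpace ℝ H]
    [CompleteSpace H] (l : Ultrafilter ι) {g : ι → H} {C : ℝ} (hg : ∀ i, ‖g i‖ ≤ C) :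
    ∃ u, ∀ h, Tendsto (fun i => inner ℝ (g i) h) l (𝓝 (inner ℝ u h)) := by
  let T : ι → WeakDual ℝ H := fun i => StrongDual.toWeakDual (InnerProductSpace.toDual ℝ H (g i))
  have hT : ∀ i, T i ∈ WeakDual.toStrongDual ⁻¹' Metric.closedBall (0 : StrongDual ℝ H) C :=
    fun i => by simpa [T] using hg i
  obtain ⟨x, -, hx⟩ := (WeakDual.isCompact_closedBall (𝕜 := ℝ) (E := H) 0 C).ultrafilter_le_nhds
    (l.map T) (le_principal_iff.2 (mem_map.2 (univ_mem' hT)))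
  refine ⟨(InnerProductSpace.toDual ℝ H).symm (WeakDual.toStrongDual x), fun h => ?_⟩
  rw [InnerProductSpace.toDual_symm_apply]
  exact ((WeakDual.eval_continuous h).tendsto x).comp hx

variable {α : Type*} {m : MeasurableSpace α} [mα : MeasurableSpace α] {μ : Measure α}

/-- `u` is the weak limit of `G` along the ultrafilter `hyperfilter ℕ`, tested against bounded
measurable functions. Using an ultrafilter gives all bounded sequences a limit at once, and makes
the limit linear in the sequence. -/
structure IsWeakLimit (μ : Measure α) (G : ℕ → α → ℝ) (u : α → ℝ) : Prop where
  bddMeas : BddMeas u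
  tendsto : ∀ φ, BddMeas φ →
    Tendsto (fun n => ∫ ω, G n ω * φ ω ∂μ) (hyperfilter ℕ) (𝓝 (∫ ω, u ω * φ ω ∂μ))

lemma integral_mul_indicator_one (u : α → ℝ) {s : Set α} (hs : MeasurableSet s) :
    ∫ ω, u ω * s.indicator (1 : α → ℝ) ω ∂μ = ∫ ω in s, u ω ∂μ := by
  rw [← integral_indicator hs]
  exact integral_congr_ae (ae_of_all _ fun ω => by by_cases hω : ω ∈ s <;> simp [hω])

lemma ae_abs_le_of_forall_abs_setIntegral_le [IsFiniteMeasure μ] {u : α → ℝ} {C : ℝ}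
    (hu : Integrable u μ) (h : ∀ s, MeasurableSet s → |∫ ω in s, u ω ∂μ| ≤ C * μ.real s) :
    ∀ᵐ ω ∂μ, |u ω| ≤ C := by
  have hC : ∀ c s, ∫ _ in s, (c : ℝ) ∂μ = c * μ.real s := fun c s => by
    rw [setIntegral_const, smul_eq_mul, mul_comm]
  have hle := ae_le_of_forall_setIntegral_le hu (integrable_const C) fun s hs _ => by
    rw [hC]; exact (abs_le.1 (h s hs)).2
  have hge := ae_le_of_forall_setIntegral_le (integrable_const (-C)) hu fun s hs _ => by
    rw [hC, neg_mul]; exact (abs_le.1 (h s hs)).1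
  filter_upwards [hle, hge] with ω h₁ h₂ using abs_le.2 ⟨h₂, h₁⟩

lemma exists_bddMeas_ae_eq (hm : m ≤ mα) {u : α → ℝ} {C : ℝ} (hu : Measurable[m] u)
    (hC : ∀ᵐ ω ∂μ, |u ω| ≤ C) : ∃ v, BddMeas v ∧ Measurable[m] v ∧ v =ᵐ[μ] u :=
  ⟨fun ω => max (-C) (min C (u ω)), .clamp (hu.mono hm le_rfl) C,
    measurable_const.max (measurable_const.min hu), hC.mono fun _ => max_neg_min_eq_self⟩

lemma ae_eq_of_integral_sq_sub_eq_zero [IsFiniteMeasure μ] {u v : α → ℝ} (hu : BddMeas u)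
    (hv : BddMeas v) (h : ∫ ω, (u ω - v ω) ^ 2 ∂μ = 0) : u =ᵐ[μ] v := by
  rw [integral_eq_zero_iff_of_nonneg (fun _ => sq_nonneg _) (((hu.sub hv).pow 2).integrable μ)] at h
  filter_upwards [h] with ω hω
  exact sub_eq_zero.1 (pow_eq_zero_iff two_ne_zero |>.1 hω)

variable {G : ℕ → α → ℝ} {u : α → ℝ}

lemma exists_bddMeas_ae_eq_condExp (hm : m ≤ mα) (hu : BddMeas u) :
    ∃ v, BddMeas v ∧ Measurable[m] v ∧ v =ᵐ[μ] μ[u | m] := by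
  obtain ⟨C, hC⟩ := hu.bounded
  exact exists_bddMeas_ae_eq hm stronglyMeasurable_condExp.measurable
    (ae_bdd_abs_condExp_of_ae_bdd_abs (ae_of_all _ hC))

variable [IsProbabilityMeasure μ]

lemma exists_integrable_tendsto_integral_mul {C : ℝ} (hG : ∀ n, Measurable (G n))
    (hC : ∀ n ω, |G n ω| ≤ C) : ∃ u, Measurable u ∧ Integrable u μ ∧ ∀ φ, BddMeas φ →
      Tendsto (fun n => ∫ ω, G n ω * φ ω ∂μ) (hyperfilter ℕ) (𝓝 (∫ ω, u ω * φ ω ∂μ)) := by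
  have hC₀ : 0 ≤ C := (abs_nonneg _).trans (hC 0 (nonempty_of_isProbabilityMeasure μ).some)
  have hGL n : MemLp (G n) 2 μ := .of_bound (hG n).aestronglyMeasurable C (ae_of_all _ (hC n))
  have hnorm n : ‖(hGL n).toLp‖ ≤ C := by
    have hae : ∀ᵐ ω ∂μ, ‖(hGL n).toLp (G n) ω‖ ≤ C :=
      (hGL n).coeFn_toLp.mono fun ω hω => hω ▸ hC n ω
    have hone : measureUnivNNReal μ = 1 := by
      rw [← ENNReal.coe_inj, coe_measureUnivNNReal, measure_univ, ENNReal.coe_one]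
    simpa [hone] using Lp.norm_le_of_ae_bound hC₀ hae
  obtain ⟨u, hu⟩ := exists_tendsto_inner_of_norm_le (hyperfilter ℕ) hnorm
  have hinner {a b : α → ℝ} (ha : MemLp a 2 μ) (hb : MemLp b 2 μ) :
      inner ℝ ha.toLp hb.toLp = ∫ ω, a ω * b ω ∂μ := by
    rw [L2.inner_def]
    refine integral_congr_ae ?_
    filter_upwards [ha.coeFn_toLp, hb.coeFn_toLp] with ω h₁ h₂
    simp [h₁, h₂, mul_comm]
  refine ⟨u, (Lp.stronglyMeasurable u).measurable, (Lp.memLp u).integrable (by norm_num),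
    fun φ hφ => ?_⟩
  have h := hu (hφ.memLp 2 μ).toLp
  rw [← Lp.toLp_coeFn u (Lp.memLp u)] at h
  simpa only [hinner] using h

lemma exists_isWeakLimit {C : ℝ} (hG : ∀ n, Measurable (G n)) (hC : ∀ n ω, |G n ω| ≤ C) :
    ∃ u, IsWeakLimit μ G u := by
  obtain ⟨u, hum, hu, hlim⟩ := exists_integrable_tendsto_integral_mul (μ := μ) hG hC
  have hset : ∀ s, MeasurableSet s → |∫ ω in s, u ω ∂μ| ≤ C * μ.real s := fun s hs => by
    have ht := hlim _ (.indicator_one hs)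
    simp only [integral_mul_indicator_one _ hs] at ht
    refine le_of_tendsto ht.abs (Eventually.of_forall fun n => ?_)
    exact norm_setIntegral_le_of_norm_le_const (f := G n) (measure_lt_top μ s) fun ω _ => hC n ω
  obtain ⟨v, hv, -, hvu⟩ :=
    exists_bddMeas_ae_eq le_rfl hum (ae_abs_le_of_forall_abs_setIntegral_le hu hset)
  refine ⟨v, hv, fun φ hφ => ?_⟩
  have hvφ : ∫ ω, v ω * φ ω ∂μ = ∫ ω, u ω * φ ω ∂μ :=
    integral_congr_ae (hvu.mul (ae_eq_refl φ))
  exact hvφ ▸ hlim φ hφ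

variable (m) in
/-- `d` has zero conditional expectation given `m`, expressed by integrals against bounded
`m`-measurable functions so as to be stable under measure-preserving maps. -/
def OrthogonalTo (μ : Measure α) (d : α → ℝ) : Prop :=
  ∀ V, BddMeas V → Measurable[m] V → ∫ ω, d ω * V ω ∂μ = 0

lemma orthogonalTo_sub_of_ae_eq_condExp (hm : m ≤ mα) (hu : BddMeas u) {v : α → ℝ}
    (hv : BddMeas v) (hvu : v =ᵐ[μ] μ[u | m]) : OrthogonalTo m μ (fun ω => u ω - v ω) := by
  intro V hV hVm
  have h := condExp_mul_of_stronglyMeasurable_right hVm.stronglyMeasurable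
    ((hu.mul hV).integrable μ) (hu.integrable μ)
  simp only [sub_mul]
  rw [integral_sub ((hu.mul hV).integrable μ) ((hv.mul hV).integrable μ), sub_eq_zero,
    ← integral_condExp hm]
  refine integral_congr_ae ?_
  filter_upwards [hvu, h] with ω h₁ h₂
  rw [h₁]
  exact h₂

lemma IsWeakLimit.ae_eq_condExp (hm : m ≤ mα) (hu : IsWeakLimit μ G u)
    (hG : ∀ n, BddMeas (G n)) (hGm : ∀ n, Measurable[m] (G n)) : u =ᵐ[μ] μ[u | m] := by
  have hu' := hu.bddMeas
  obtain ⟨v, hv, hvm, hvu⟩ := exists_bddMeas_ae_eq_condExp (μ := μ) hm hu'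
  have horth := orthogonalTo_sub_of_ae_eq_condExp hm hu' hv hvu
  have hlim := hu.tendsto (fun ω => u ω - v ω) (hu'.sub hv)
  simp only [mul_comm _ (u _ - v _), fun n => horth _ (hG n) (hGm n)] at hlim
  have hsq : ∫ ω, (u ω - v ω) ^ 2 ∂μ = 0 := by
    have hsplit ω : (u ω - v ω) ^ 2 = (u ω - v ω) * u ω - (u ω - v ω) * v ω := by ring
    simp only [hsplit]
    rw [integral_sub (BddMeas.integrable (by fun_prop) μ) (BddMeas.integrable (by fun_prop) μ),
      horth v hv hvm, sub_zero]
    exact (tendsto_nhds_unique tendsto_const_nhds hlim).symm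
  exact (ae_eq_of_integral_sq_sub_eq_zero hu' hv hsq).trans hvu

end WeakLimit

section Plane

lemma measurable_mulVec (M : Matrix (Fin 2) (Fin 2) ℝ) :
    Measurable (fun v : Fin 2 → ℝ => M *ᵥ v) :=
  (Continuous.matrix_mulVec continuous_const continuous_id).measurable

lemma norm_mulVec_le (B : Matrix (Fin 2) (Fin 2) ℝ) (x : Fin 2 → ℝ) :
    ‖B *ᵥ x‖ ≤ 2 * ‖B‖ * ‖x‖ := by
  have hx : ‖WithLp.toLp 2 x‖ ≤ 2 * ‖x‖ := by
    rw [EuclideanSpace.norm_eq, Real.sqrt_le_left (by positivity), Fin.sum_univ_two]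
    nlinarith [norm_nonneg (x 0), norm_nonneg (x 1), norm_nonneg x, norm_le_pi_norm x 0,
      norm_le_pi_norm x 1]
  refine (pi_norm_le_iff_of_nonneg (by positivity)).2 fun i => ?_
  calc ‖(B *ᵥ x) i‖ ≤ ‖WithLp.toLp 2 (B *ᵥ x)‖ := PiLp.norm_apply_le (WithLp.toLp 2 (B *ᵥ x)) i
    _ ≤ ‖B‖ * ‖WithLp.toLp 2 x‖ := Matrix.l2_opNorm_mulVec B (WithLp.toLp 2 x)
    _ ≤ ‖B‖ * (2 * ‖x‖) := by gcongr
    _ = 2 * ‖B‖ * ‖x‖ := by ring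

lemma abs_apply_le_norm (B : Matrix (Fin 2) (Fin 2) ℝ) (i j : Fin 2) : |B i j| ≤ ‖B‖ := by
  have h := Matrix.l2_opNorm_mulVec B (EuclideanSpace.single j (1 : ℝ))
  rw [PiLp.norm_single, norm_one, mul_one] at h
  refine le_trans (le_trans (le_of_eq ?_) (PiLp.norm_apply_le _ i)) h
  simp

lemma one_le_two_mul_norm {B : Matrix (Fin 2) (Fin 2) ℝ} (hB : B.det = 1) : 1 ≤ 2 * ‖B‖ := by
  have hmul i j k l : |B i j * B k l| ≤ ‖B‖ * ‖B‖ := by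
    rw [abs_mul]
    exact mul_le_mul (abs_apply_le_norm B i j) (abs_apply_le_norm B k l) (abs_nonneg _)
      (norm_nonneg B)
  rw [Matrix.det_fin_two] at hB
  nlinarith [norm_nonneg B, le_abs_self (B 0 0 * B 1 1), neg_abs_le (B 0 1 * B 1 0),
    hmul 0 0 1 1, hmul 0 1 1 0]

lemma measurePreserving_mulVec {B : Matrix (Fin 2) (Fin 2) ℝ} (hB : B.det = 1) :
    MeasurePreserving (fun x : Fin 2 → ℝ => B *ᵥ x) := by
  refine ⟨measurable_mulVec B, ?_⟩
  have h := Real.map_matrix_volume_pi_eq_smul_volume_pi (M := B) (hB ▸ one_ne_zero)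
  rwa [hB, inv_one, abs_one, ENNReal.ofReal_one, one_smul] at h

lemma mulVec_ne_zero_of_det_eq_one {B : Matrix (Fin 2) (Fin 2) ℝ} (hB : B.det = 1)
    {x : Fin 2 → ℝ} (hx : x ≠ 0) : B *ᵥ x ≠ 0 := fun h =>
  hx (Matrix.eq_zero_of_mulVec_eq_zero (hB ▸ one_ne_zero) h)

end Plane

section HeavyTail

/-- A heavy-tailed probability density on the plane. Its polynomial decay makes the relative
density of its image under `B ∈ SL(2, ℝ)` at most a power of `‖B‖`. -/
noncomputable def heavyTailDensity (x : Fin 2 → ℝ) : ℝ :=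
  (1 + ‖x‖) ^ (-3 : ℝ) / ∫ y : Fin 2 → ℝ, (1 + ‖y‖) ^ (-3 : ℝ)

/-- The probability measure on the plane with density `heavyTailDensity`. -/
noncomputable def heavyTail : Measure (Fin 2 → ℝ) :=
  volume.withDensity fun x => ENNReal.ofReal (heavyTailDensity x)

lemma integrable_one_add_norm_rpow_neg_three :
    Integrable (fun y : Fin 2 → ℝ => (1 + ‖y‖) ^ (-3 : ℝ)) :=
  integrable_one_add_norm (by rw [Module.finrank_fin_fun]; norm_num)

lemma integral_one_add_norm_rpow_neg_three_pos :
    0 < ∫ y : Fin 2 → ℝ, (1 + ‖y‖) ^ (-3 : ℝ) := by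
  rw [integral_pos_iff_support_of_nonneg (fun y => by positivity)
    integrable_one_add_norm_rpow_neg_three]
  have hsupp : Function.support (fun y : Fin 2 → ℝ => (1 + ‖y‖) ^ (-3 : ℝ)) = univ :=
    eq_univ_of_forall fun y => (show 0 < (1 + ‖y‖) ^ (-3 : ℝ) by positivity).ne'
  rw [hsupp]
  exact NeZero.pos _

lemma heavyTailDensity_pos (x : Fin 2 → ℝ) : 0 < heavyTailDensity x :=
  div_pos (by positivity) integral_one_add_norm_rpow_neg_three_pos

lemma integrable_heavyTailDensity : Integrable heavyTailDensity :=
  integrable_one_add_norm_rpow_neg_three.div_const _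

lemma integral_heavyTailDensity : ∫ x, heavyTailDensity x = 1 := by
  simp only [heavyTailDensity]
  rw [integral_div, div_self integral_one_add_norm_rpow_neg_three_pos.ne']

lemma measurable_heavyTailDensity : Measurable heavyTailDensity := by
  unfold heavyTailDensity
  fun_prop

lemma integral_heavyTail (g : (Fin 2 → ℝ) → ℝ) :
    ∫ x, g x ∂heavyTail = ∫ x, g x * heavyTailDensity x := by
  rw [heavyTail, integral_withDensity_eq_integral_toReal_smul
    measurable_heavyTailDensity.ennreal_ofReal (by simp)]
  simp only [ENNReal.toReal_ofReal (heavyTailDensity_pos _).le, smul_eq_mul, mul_comm]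

instance : IsProbabilityMeasure heavyTail where
  measure_univ := by
    rw [heavyTail, withDensity_apply _ MeasurableSet.univ, Measure.restrict_univ,
      ← ofReal_integral_eq_lintegral_ofReal integrable_heavyTailDensity
        (ae_of_all _ fun x => (heavyTailDensity_pos x).le),
      integral_heavyTailDensity, ENNReal.ofReal_one]

lemma ae_heavyTail_ne_zero : ∀ᵐ x ∂heavyTail, x ≠ 0 :=
  (withDensity_absolutelyContinuous _ _).ae_le (Measure.ae_ne volume 0)

lemma BddMeas.integrable_mul_heavyTailDensity {g : (Fin 2 → ℝ) → ℝ} (hg : BddMeas g) :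
    Integrable (fun x => g x * heavyTailDensity x) :=
  let ⟨_, hC⟩ := hg.bounded
  integrable_heavyTailDensity.bdd_mul hg.measurable.aestronglyMeasurable (ae_of_all _ hC)

variable {B : Matrix (Fin 2) (Fin 2) ℝ}

lemma log_heavyTailDensity_div_le (hB : B.det = 1) (x : Fin 2 → ℝ) :
    log (heavyTailDensity x / heavyTailDensity (B *ᵥ x)) ≤ 3 * log (2 * ‖B‖) := by
  have hnorm : 1 + ‖B *ᵥ x‖ ≤ 2 * ‖B‖ * (1 + ‖x‖) := by
    linarith [norm_mulVec_le B x, one_le_two_mul_norm hB]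
  have hB0 : 0 < 2 * ‖B‖ := one_pos.trans_le (one_le_two_mul_norm hB)
  have hx : 0 < 1 + ‖x‖ := by positivity
  have hBx : 0 < 1 + ‖B *ᵥ x‖ := by positivity
  have hlog := log_le_log hBx hnorm
  rw [log_mul hB0.ne' hx.ne'] at hlog
  rw [heavyTailDensity, heavyTailDensity,
    div_div_div_cancel_right₀ integral_one_add_norm_rpow_neg_three_pos.ne',
    log_div (by positivity) (by positivity), log_rpow hx, log_rpow hBx]
  linarith

lemma log_mul_heavyTailDensity_le (hB : B.det = 1) (x : Fin 2 → ℝ) {a : ℝ} (ha : 0 < a) :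
    log a * heavyTailDensity x ≤
      (3 * log (2 * ‖B‖) - 1) * heavyTailDensity x + a * heavyTailDensity (B *ᵥ x) := by
  set p := heavyTailDensity x
  set q := heavyTailDensity (B *ᵥ x)
  have hp : 0 < p := heavyTailDensity_pos x
  have hq : 0 < q := heavyTailDensity_pos (B *ᵥ x)
  have hsplit : log a = log (a * q / p) + log (p / q) := by
    rw [← log_mul (by positivity) (by positivity)]
    congr 1
    field_simp
  calc log a * p ≤ ((a * q / p - 1) + 3 * log (2 * ‖B‖)) * p := by
        rw [hsplit]
        gcongr
        exacts [log_le_sub_one_of_pos (by positivity), log_heavyTailDensity_div_le hB x]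
    _ = (3 * log (2 * ‖B‖) - 1) * p + a * q := by field_simp; ring

/- Gibbs' variational inequality: a test function `log g` transported by `B` is bounded by the
relative entropy of the transported measure plus `log ∫ g ≤ ∫ g - 1`. -/
lemma integral_log_comp_mulVec_le (hB : B.det = 1) {g : (Fin 2 → ℝ) → ℝ} (hg : BddMeas g) {ε : ℝ}
    (hε : 0 < ε) (hgε : ∀ z, ε ≤ g z) :
    ∫ x, log (g (B *ᵥ x)) ∂heavyTail ≤ 3 * log (2 * ‖B‖) - 1 + ∫ z, g z ∂heavyTail := by
  have hmp := measurePreserving_mulVec hB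
  have hBmeas := measurable_mulVec B
  have hlog : BddMeas fun x => log (g (B *ᵥ x)) :=
    (hg.comp hBmeas).log hε fun x => hgε _
  have hint : Integrable fun x => g (B *ᵥ x) * heavyTailDensity (B *ᵥ x) :=
    hmp.integrable_comp_of_integrable hg.integrable_mul_heavyTailDensity
  have hchange : ∫ x, g (B *ᵥ x) * heavyTailDensity (B *ᵥ x) = ∫ z, g z * heavyTailDensity z := by
    conv_rhs => rw [← hmp.map_eq]
    exact (integral_map hBmeas.aemeasurable
      (hg.measurable.mul measurable_heavyTailDensity).aestronglyMeasurable).symm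
  simp only [integral_heavyTail]
  calc ∫ x, log (g (B *ᵥ x)) * heavyTailDensity x
      ≤ ∫ x, ((3 * log (2 * ‖B‖) - 1) * heavyTailDensity x +
          g (B *ᵥ x) * heavyTailDensity (B *ᵥ x)) :=
        integral_mono hlog.integrable_mul_heavyTailDensity
          ((integrable_heavyTailDensity.const_mul _).add hint)
          fun x => log_mul_heavyTailDensity_le hB x (hε.trans_le (hgε _))
    _ = 3 * log (2 * ‖B‖) - 1 + ∫ z, g z * heavyTailDensity z := by
        rw [integral_add (integrable_heavyTailDensity.const_mul _) hint, integral_const_mul,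
          integral_heavyTailDensity, hchange, mul_one]

end HeavyTail

section ReverseMartingale

variable {α : Type*} {𝒢 : MeasurableSpace α} [mα : MeasurableSpace α] {μ : Measure α}

lemma BddMeas.integral_comp {β : Type*} [MeasurableSpace β] {ν : Measure β} {f : α → ℝ}
    (hf : BddMeas f) {g : β → α} (hg : MeasurePreserving g ν μ) :
    ∫ x, f (g x) ∂ν = ∫ y, f y ∂μ := by
  rw [← hg.map_eq]
  exact (integral_map hg.measurable.aemeasurable hf.measurable.aestronglyMeasurable).symm

namespace OrthogonalTo

variable {d : α → ℝ}

lemma mul (h : OrthogonalTo 𝒢 μ d) {V : α → ℝ} (hV : BddMeas V) (hV𝒢 : Measurable[𝒢] V) :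
    OrthogonalTo 𝒢 μ (fun ω => d ω * V ω) := fun U hU hU𝒢 => by
  simpa only [mul_assoc] using h _ (hV.mul hU) (hV𝒢.mul hU𝒢)

lemma comp (h : OrthogonalTo 𝒢 μ d) (h𝒢 : 𝒢 ≤ mα) (hd : BddMeas d) {g : α → α}
    (hg : MeasurePreserving g μ μ) : OrthogonalTo (𝒢.comap g) μ (fun ω => d (g ω)) := by
  intro V hV hVm
  obtain ⟨W, hW, rfl⟩ := @Measurable.exists_eq_measurable_comp _ _ _ 𝒢 _ _ _ _ _ hVm
  obtain ⟨C, hC⟩ := hV.bounded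
  have hclamp := BddMeas.clamp (hW.mono h𝒢 le_rfl) C
  calc ∫ ω, d (g ω) * W (g ω) ∂μ = ∫ ω, d (g ω) * max (-C) (min C (W (g ω))) ∂μ := by
        simp only [fun ω => max_neg_min_eq_self (x := W (g ω)) (hC ω)]
    _ = ∫ ω, d ω * max (-C) (min C (W ω)) ∂μ := (hd.mul hclamp).integral_comp hg
    _ = 0 := h _ hclamp (measurable_const.max (measurable_const.min hW))

end OrthogonalTo

lemma integral_prod_one_add_eq_one [IsProbabilityMeasure μ] {𝒢 : ℕ → MeasurableSpace α}
    (h𝒢 : Antitone 𝒢) {Y : ℕ → α → ℝ} (hY : ∀ m, BddMeas (Y m))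
    (hYm : ∀ m, Measurable[𝒢 m] (Y (m + 1))) (horth : ∀ m, OrthogonalTo (𝒢 m) μ (Y m)) (r p : ℕ) :
    ∫ ω, ∏ m ∈ Finset.range r, (1 + Y (p + m) ω) ∂μ = 1 := by
  induction r generalizing p with
  | zero => simp
  | succ r ih =>
    let V ω := ∏ m ∈ Finset.range r, (1 + Y (p + 1 + m) ω)
    have hV : BddMeas V := by fun_prop
    have hVm : Measurable[𝒢 p] V := Finset.measurable_fun_prod _ fun m _ =>
      measurable_const.add (by
        rw [add_right_comm]
        exact (hYm (p + m)).mono (h𝒢 (Nat.le_add_right p m)) le_rfl)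
    have hsplit ω : ∏ m ∈ Finset.range (r + 1), (1 + Y (p + m) ω) = V ω + Y p ω * V ω := by
      simp only [Finset.prod_range_succ', add_zero, V, add_assoc, add_comm 1]
      ring
    simp only [hsplit]
    rw [integral_add (hV.integrable μ) (((hY p).mul hV).integrable μ), horth p V hV hVm, ih,
      add_zero]

end ReverseMartingale

section Cocycle

variable {α : Type*} {𝒢 : MeasurableSpace α}

lemma measurable_mulVec_of_stronglyMeasurable {A : α → Matrix (Fin 2) (Fin 2) ℝ} {v : α → Fin 2 → ℝ}
    (hA : StronglyMeasurable[𝒢] A) (hv : Measurable[𝒢] v) : Measurable[𝒢] fun ω => A ω *ᵥ v ω :=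
  (Continuous.comp_stronglyMeasurable (continuous_fst.matrix_mulVec continuous_snd)
    (hA.prodMk hv.stronglyMeasurable)).measurable

lemma stronglyMeasurable_adjugate {A : α → Matrix (Fin 2) (Fin 2) ℝ}
    (hA : StronglyMeasurable[𝒢] A) : StronglyMeasurable[𝒢] fun ω => (A ω).adjugate :=
  continuous_id.matrix_adjugate.comp_stronglyMeasurable hA

/-- The product `A(T^(n-1) ω) ⋯ A(T ω) A(ω)` of a matrix cocycle over `T`. -/
def cocycleProd (T : α → α) (A : α → Matrix (Fin 2) (Fin 2) ℝ) :
    ℕ → α → Matrix (Fin 2) (Fin 2) ℝ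
  | 0, _ => 1
  | n + 1, ω => A (T^[n] ω) * cocycleProd T A n ω

variable {T : α → α} {A : α → Matrix (Fin 2) (Fin 2) ℝ}

lemma cocycleProd_add (a r : ℕ) (ω : α) :
    cocycleProd T A (a + r) ω = cocycleProd T A r (T^[a] ω) * cocycleProd T A a ω := by
  induction r with
  | zero => rw [add_zero, cocycleProd, one_mul]
  | succ r ih =>
    rw [← add_assoc, cocycleProd, ih, cocycleProd, add_comm a r, Function.iterate_add_apply,
      Matrix.mul_assoc]

lemma det_cocycleProd (hA : ∀ ω, (A ω).det = 1) (n : ℕ) (ω : α) :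
    (cocycleProd T A n ω).det = 1 := by
  induction n with
  | zero => exact det_one
  | succ n ih => rw [cocycleProd, det_mul, hA, ih, one_mul]

variable [mα : MeasurableSpace α]

/-- `A` is a bounded measurable family of matrices in `SL(2, ℝ)`. -/
structure BddSL2 (A : α → Matrix (Fin 2) (Fin 2) ℝ) : Prop where
  det_eq_one : ∀ ω, (A ω).det = 1
  stronglyMeasurable : StronglyMeasurable A
  bounded : ∃ K, ∀ ω, ‖A ω‖ ≤ K

namespace BddSL2

variable {B : α → Matrix (Fin 2) (Fin 2) ℝ}

lemma one : BddSL2 fun _ : α => 1 :=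
  ⟨fun _ => det_one, stronglyMeasurable_const, _, fun _ => le_rfl⟩

lemma mul (hA : BddSL2 A) (hB : BddSL2 B) : BddSL2 fun ω => A ω * B ω := by
  obtain ⟨K, hK⟩ := hA.bounded
  obtain ⟨L, hL⟩ := hB.bounded
  exact ⟨fun ω => by rw [det_mul, hA.det_eq_one, hB.det_eq_one, one_mul],
    hA.stronglyMeasurable.mul hB.stronglyMeasurable, K * L, fun ω =>
    (l2_opNorm_mul _ _).trans (mul_le_mul (hK ω) (hL ω) (norm_nonneg _)
      ((norm_nonneg _).trans (hK ω)))⟩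

lemma comp {β : Type*} [MeasurableSpace β] (hA : BddSL2 A) {g : β → α} (hg : Measurable g) :
    BddSL2 fun ω => A (g ω) :=
  ⟨fun _ => hA.det_eq_one _, hA.stronglyMeasurable.comp_measurable hg,
    hA.bounded.imp fun _ hK _ => hK _⟩

lemma log_norm (hA : BddSL2 A) : BddMeas fun ω => log (2 * ‖A ω‖) := by
  obtain ⟨K, hK⟩ := hA.bounded
  have hnorm : BddMeas fun ω => ‖A ω‖ :=
    ⟨hA.stronglyMeasurable.norm.measurable, K, fun ω => by rw [abs_norm]; exact hK ω⟩
  exact BddMeas.log (by fun_prop) one_pos fun ω => one_le_two_mul_norm (hA.det_eq_one ω)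

end BddSL2

lemma BddSL2.cocycleProd (hA : BddSL2 A) (hT : Measurable T) (n : ℕ) :
    BddSL2 (cocycleProd T A n) := by
  induction n with
  | zero => exact .one
  | succ n ih => exact (hA.comp (hT.iterate n)).mul ih

variable (T A 𝒢) in
/-- `𝒢` is a factor algebra of the cocycle: both `T` and `A` descend to the factor it defines. -/
structure IsFactorAlgebra : Prop where
  le : 𝒢 ≤ mα
  comap_le : 𝒢.comap T ≤ 𝒢
  stronglyMeasurable : StronglyMeasurable[𝒢] A

namespace IsFactorAlgebra

lemma measurable_iterate (h : IsFactorAlgebra 𝒢 T A) (n : ℕ) : Measurable[𝒢, 𝒢] T^[n] :=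
  (measurable_iff_comap_le.2 h.comap_le).iterate n

lemma stronglyMeasurable_cocycleProd (h : IsFactorAlgebra 𝒢 T A) (n : ℕ) :
    StronglyMeasurable[𝒢] (cocycleProd T A n) := by
  induction n with
  | zero => exact stronglyMeasurable_const
  | succ n ih => exact (h.stronglyMeasurable.comp_measurable (h.measurable_iterate n)).mul ih

lemma antitone_comap_iterate (h : IsFactorAlgebra 𝒢 T A) :
    Antitone fun n => 𝒢.comap T^[n] := antitone_nat_of_succ_le fun n => by
  rw [Function.iterate_succ', ← MeasurableSpace.comap_comp]
  exact MeasurableSpace.comap_mono h.comap_le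

end IsFactorAlgebra

end Cocycle

section Tilt

variable {α : Type*} {𝒢 : MeasurableSpace α}

/-- The average of `f` over the image of the measure `heavyTail` under `B`. -/
noncomputable def imageAvg (f : (Fin 2 → ℝ) → ℝ) (B : Matrix (Fin 2) (Fin 2) ℝ) : ℝ :=
  ∫ x, f (B *ᵥ x) ∂heavyTail

lemma abs_imageAvg_le {f : (Fin 2 → ℝ) → ℝ} {C : ℝ} (hC : ∀ v, |f v| ≤ C)
    (B : Matrix (Fin 2) (Fin 2) ℝ) : |imageAvg f B| ≤ C := by
  have h := norm_integral_le_of_norm_le_const (μ := heavyTail) (f := fun x => f (B *ᵥ x))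
    (ae_of_all _ fun x => hC _)
  rwa [probReal_univ, mul_one] at h

lemma measurable_imageAvg {f : (Fin 2 → ℝ) → ℝ} (hf : Measurable f)
    {A : α → Matrix (Fin 2) (Fin 2) ℝ} (hA : StronglyMeasurable[𝒢] A) :
    Measurable[𝒢] fun ω => imageAvg f (A ω) := by
  have hjoint : Measurable fun p : α × (Fin 2 → ℝ) => f (A p.1 *ᵥ p.2) :=
    hf.comp (measurable_mulVec_of_stronglyMeasurable (hA.comp_measurable measurable_fst)
      measurable_snd)
  exact (hjoint.stronglyMeasurable.integral_prod_right (ν := heavyTail)).measurable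

lemma sub_two_mul_sq_le_log {x : ℝ} (hx : -(1 / 2) ≤ x) : x - 2 * x ^ 2 ≤ log (1 + x) := by
  have hx₁ : 0 < 1 + x := by linarith
  calc x - 2 * x ^ 2 ≤ x / (1 + x) := by
        rw [le_div_iff₀ hx₁]
        nlinarith [mul_nonneg (sq_nonneg x) (show 0 ≤ 1 + 2 * x by linarith)]
    _ = 1 - (1 + x)⁻¹ := by field_simp; ring
    _ ≤ log (1 + x) := one_sub_inv_le_log_of_pos hx₁

variable {T : α → α} {A : α → Matrix (Fin 2) (Fin 2) ℝ} {f : (Fin 2 → ℝ) → ℝ} {d : α → ℝ} {δ : ℝ}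

variable (T A f d) in
/-- The contribution of time `m` to `tilt`: at `z = cocycleProd T A n ω *ᵥ x` it equals
`d (T^m ω) * f (cocycleProd T A m ω *ᵥ x)`, but at fixed `z` it depends on the future only. -/
def tiltStep (n m : ℕ) (p : α × (Fin 2 → ℝ)) : ℝ :=
  d (T^[m] p.1) * f ((cocycleProd T A (n - m) (T^[m] p.1)).adjugate *ᵥ p.2)

variable (T A f d) in
/-- The positive function `∏_{m < n} (1 + tiltStep)`, a reverse martingale product with mean `1`
at each fixed second variable, serving as test function in Gibbs' inequality. -/
def tilt (n : ℕ) (p : α × (Fin 2 → ℝ)) : ℝ :=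
  ∏ m ∈ Finset.range n, (1 + tiltStep T A f d n m p)

lemma half_pow_le_tilt (hδ : δ ≤ 1 / 2) (hd : ∀ ω v, |d ω * f v| ≤ δ) (n : ℕ)
    (p : α × (Fin 2 → ℝ)) : (1 / 2) ^ n ≤ tilt T A f d n p := by
  have h := Finset.prod_le_prod (s := Finset.range n) (f := fun _ => (1 / 2 : ℝ))
    (g := fun m => 1 + tiltStep T A f d n m p) (fun _ _ => by norm_num)
    fun m _ => by
      have := (abs_le.1 (hd (T^[m] p.1) ((cocycleProd T A (n - m) (T^[m] p.1)).adjugate *ᵥ p.2))).1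
      rw [tiltStep]
      linarith
  rwa [Finset.prod_const, Finset.card_range] at h

lemma tiltStep_mulVec (hA : ∀ ω, (A ω).det = 1) {n m : ℕ} (hm : m ≤ n) (ω : α) (x : Fin 2 → ℝ) :
    tiltStep T A f d n m (ω, cocycleProd T A n ω *ᵥ x) =
      d (T^[m] ω) * f (cocycleProd T A m ω *ᵥ x) := by
  have hsplit : cocycleProd T A n ω =
      cocycleProd T A (n - m) (T^[m] ω) * cocycleProd T A m ω := by
    rw [← cocycleProd_add, Nat.add_sub_cancel' hm]
  rw [tiltStep, hsplit, mulVec_mulVec, ← Matrix.mul_assoc, adjugate_mul, det_cocycleProd hA,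
    one_smul, Matrix.one_mul]

lemma sum_sub_le_log_tilt (hA : ∀ ω, (A ω).det = 1) (hδ : δ ≤ 1 / 2)
    (hd : ∀ ω v, |d ω * f v| ≤ δ) (n : ℕ) (ω : α) (x : Fin 2 → ℝ) :
    ∑ m ∈ Finset.range n, (d (T^[m] ω) * f (cocycleProd T A m ω *ᵥ x) - 2 * δ ^ 2) ≤
      log (tilt T A f d n (ω, cocycleProd T A n ω *ᵥ x)) := by
  have hstep m := abs_le.1 (hd (T^[m] ω) (cocycleProd T A m ω *ᵥ x))
  have htilt : tilt T A f d n (ω, cocycleProd T A n ω *ᵥ x) =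
      ∏ m ∈ Finset.range n, (1 + d (T^[m] ω) * f (cocycleProd T A m ω *ᵥ x)) :=
    Finset.prod_congr rfl fun m hm => by
      rw [tiltStep_mulVec hA (Finset.mem_range.1 hm).le]
  rw [htilt, log_prod fun m _ => by linarith [(hstep m).1]]
  refine Finset.sum_le_sum fun m _ => ?_
  linarith [sub_two_mul_sq_le_log ((neg_le_neg hδ).trans (hstep m).1),
    sq_le_sq' (hstep m).1 (hstep m).2]

variable [mα : MeasurableSpace α] {μ : Measure α}

lemma bddMeas_tilt (hT : Measurable T) (hA : BddSL2 A) (hf : BddMeas f) (hd : BddMeas d) (n : ℕ) :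
    BddMeas (tilt T A f d n) := by
  have hiter m : Measurable fun p : α × (Fin 2 → ℝ) => T^[m] p.1 :=
    (hT.iterate m).comp measurable_fst
  have hvec m : Measurable fun p : α × (Fin 2 → ℝ) =>
      (cocycleProd T A (n - m) (T^[m] p.1)).adjugate *ᵥ p.2 :=
    measurable_mulVec_of_stronglyMeasurable (stronglyMeasurable_adjugate
      ((hA.cocycleProd hT (n - m)).comp (hiter m)).stronglyMeasurable) measurable_snd
  exact BddMeas.prod _ fun m => (BddMeas.const 1).add ((hd.comp (hiter m)).mul (hf.comp (hvec m)))

lemma integral_tilt [IsProbabilityMeasure μ] (hT : MeasurePreserving T μ μ)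
    (h𝒢 : IsFactorAlgebra 𝒢 T A) (hf : BddMeas f) (hd : BddMeas d)
    (hdT : Measurable[𝒢] fun ω => d (T ω)) (horth : OrthogonalTo 𝒢 μ d) (n : ℕ)
    (z : Fin 2 → ℝ) : ∫ ω, tilt T A f d n (ω, z) ∂μ = 1 := by
  have hvec r : Measurable[𝒢] fun ω => f ((cocycleProd T A r ω).adjugate *ᵥ z) :=
    hf.measurable.comp (measurable_mulVec_of_stronglyMeasurable
      (stronglyMeasurable_adjugate (h𝒢.stronglyMeasurable_cocycleProd r)) measurable_const)
  have hV r : BddMeas fun ω => f ((cocycleProd T A r ω).adjugate *ᵥ z) :=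
    ⟨(hvec r).mono h𝒢.le le_rfl, hf.bounded.imp fun _ hC _ => hC _⟩
  have hstep m : Measurable[𝒢.comap T^[m]] fun ω => tiltStep T A f d n (m + 1) (ω, z) := by
    simp only [tiltStep, Function.iterate_succ_apply']
    exact (hdT.mul ((hvec (n - (m + 1))).comp (measurable_iff_comap_le.2 h𝒢.comap_le))).comp
      (comap_measurable T^[m])
  have h := integral_prod_one_add_eq_one (μ := μ) h𝒢.antitone_comap_iterate
    (Y := fun m ω => tiltStep T A f d n m (ω, z))
    (fun m => (hd.mul (hV (n - m))).comp (hT.measurable.iterate m)) hstep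
    (fun m => (horth.mul (hV (n - m)) (hvec (n - m))).comp h𝒢.le (hd.mul (hV (n - m)))
      (hT.iterate m)) n 0
  simpa only [zero_add, tilt] using h

lemma sum_mul_imageAvg_le (hT : Measurable T) (hA : BddSL2 A) (hf : BddMeas f) (hd : BddMeas d)
    (hδ : δ ≤ 1 / 2) (hdf : ∀ ω v, |d ω * f v| ≤ δ) (n : ℕ) (ω : α) :
    ∑ m ∈ Finset.range n, (d (T^[m] ω) * imageAvg f (cocycleProd T A m ω) - 2 * δ ^ 2) ≤
      3 * log (2 * ‖cocycleProd T A n ω‖) - 1 + ∫ z, tilt T A f d n (ω, z) ∂heavyTail := by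
  have hfb m : BddMeas fun x => d (T^[m] ω) * f (cocycleProd T A m ω *ᵥ x) :=
    (BddMeas.const _).mul (hf.comp (measurable_mulVec _))
  have htilt : BddMeas fun z => tilt T A f d n (ω, z) :=
    (bddMeas_tilt hT hA hf hd n).comp measurable_prodMk_left
  have hpos : (0 : ℝ) < (1 / 2) ^ n := by positivity
  have hlower z := half_pow_le_tilt hδ hdf n (T := T) (A := A) (ω, z)
  calc ∑ m ∈ Finset.range n, (d (T^[m] ω) * imageAvg f (cocycleProd T A m ω) - 2 * δ ^ 2)
      = ∫ x, ∑ m ∈ Finset.range n,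
          (d (T^[m] ω) * f (cocycleProd T A m ω *ᵥ x) - 2 * δ ^ 2) ∂heavyTail := by
        rw [integral_finsetSum _ fun m _ => ((hfb m).sub (.const _)).integrable _]
        simp only [integral_sub ((hfb _).integrable _) (integrable_const _), integral_const_mul,
          integral_const, probReal_univ, one_smul, imageAvg]
    _ ≤ ∫ x, log (tilt T A f d n (ω, cocycleProd T A n ω *ᵥ x)) ∂heavyTail :=
        integral_mono ((BddMeas.sum _ fun m => (hfb m).sub (.const _)).integrable _)
          (((htilt.comp (measurable_mulVec _)).log hpos fun x => hlower _).integrable _)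
          fun x => sum_sub_le_log_tilt hA.det_eq_one hδ hdf n ω x
    _ ≤ _ := integral_log_comp_mulVec_le (det_cocycleProd hA.det_eq_one n ω) htilt hpos hlower

lemma sum_integral_mul_imageAvg_le [IsProbabilityMeasure μ] (hT : MeasurePreserving T μ μ)
    (hA : BddSL2 A) (h𝒢 : IsFactorAlgebra 𝒢 T A) (hf : BddMeas f) (hd : BddMeas d)
    (hdT : Measurable[𝒢] fun ω => d (T ω)) (horth : OrthogonalTo 𝒢 μ d) (hδ : δ ≤ 1 / 2)
    (hdf : ∀ ω v, |d ω * f v| ≤ δ) (n : ℕ) :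
    ∑ m ∈ Finset.range n, ∫ ω, d (T^[m] ω) * imageAvg f (cocycleProd T A m ω) ∂μ ≤
      3 * ∫ ω, log (2 * ‖cocycleProd T A n ω‖) ∂μ + n * (2 * δ ^ 2) := by
  have hcocycle := hA.cocycleProd hT.measurable
  have htilt := (bddMeas_tilt hT.measurable hA hf hd n).integrable (μ.prod heavyTail)
  have hlog := (hcocycle n).log_norm
  have hterm m : BddMeas fun ω => d (T^[m] ω) * imageAvg f (cocycleProd T A m ω) :=
    (hd.comp (hT.measurable.iterate m)).mul
      ⟨measurable_imageAvg hf.measurable (hcocycle m).stronglyMeasurable,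
        hf.bounded.imp fun _ hC _ => abs_imageAvg_le hC _⟩
  have hmean : ∫ ω, ∫ z, tilt T A f d n (ω, z) ∂heavyTail ∂μ = 1 := by
    rw [integral_integral_swap (f := fun ω z => tilt T A f d n (ω, z)) htilt]
    simp only [integral_tilt hT h𝒢 hf hd hdT horth, integral_const, probReal_univ, one_smul]
  have hI := integral_mono (μ := μ)
    ((BddMeas.sum (Finset.range n) fun m => (hterm m).sub (.const (2 * δ ^ 2))).integrable μ)
    ((BddMeas.integrable (by fun_prop) μ).add htilt.integral_prod_left)
    (sum_mul_imageAvg_le hT.measurable hA hf hd hδ hdf n)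
  simp only [Pi.add_apply] at hI
  rw [integral_add (BddMeas.integrable (by fun_prop) μ) htilt.integral_prod_left, hmean,
    integral_sub (BddMeas.integrable (by fun_prop) μ) (integrable_const _),
    integral_finsetSum _ fun m _ => BddMeas.integrable (by fun_prop) μ] at hI
  simp only [integral_sub ((hterm _).integrable μ) (integrable_const _), integral_const_mul,
    integral_const, probReal_univ, one_smul, Finset.sum_sub_distrib, Finset.sum_const,
    Finset.card_range, nsmul_eq_mul] at hI
  linarith

end Tilt

section PastAverage

variable {α : Type*} {𝒢 : MeasurableSpace α} [mα : MeasurableSpace α] {T : α ≃ᵐ α}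
  {A : α → Matrix (Fin 2) (Fin 2) ℝ} {f : (Fin 2 → ℝ) → ℝ} {C : ℝ} {μ : Measure α}

variable (T A) in
/-- The product of the cocycle over the `m` steps of the orbit that end at `ω`. -/
def pastProd (m : ℕ) (ω : α) : Matrix (Fin 2) (Fin 2) ℝ := cocycleProd T A m (T.symm^[m] ω)

lemma pastProd_iterate (m : ℕ) (ω : α) : pastProd T A m (T^[m] ω) = cocycleProd T A m ω :=
  congrArg _ ((Function.LeftInverse.iterate T.symm_apply_apply m) ω)

lemma pastProd_succ (m : ℕ) (ω : α) :
    pastProd T A (m + 1) ω = A (T.symm ω) * pastProd T A m (T.symm ω) := by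
  simp only [pastProd, cocycleProd, Function.iterate_succ_apply]
  rw [(Function.RightInverse.iterate T.apply_symm_apply m) (T.symm ω)]

lemma stronglyMeasurable_pastProd (h𝒢 : IsFactorAlgebra 𝒢 T.symm (A ∘ T.symm)) (m : ℕ) :
    StronglyMeasurable[𝒢] (pastProd T A m) := by
  induction m with
  | zero => exact stronglyMeasurable_const
  | succ m ih =>
    rw [funext (pastProd_succ m)]
    exact h𝒢.stronglyMeasurable.mul (ih.comp_measurable (h𝒢.measurable_iterate 1))

variable (T A) in
/-- The average of `f` over the image of `heavyTail` under the past of `ω`. -/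
noncomputable def pastAvg (f : (Fin 2 → ℝ) → ℝ) (m : ℕ) (ω : α) : ℝ :=
  imageAvg f (pastProd T A m ω)

lemma bddMeas_pastAvg (hA : BddSL2 A) (hf : BddMeas f) (m : ℕ) : BddMeas (pastAvg T A f m) :=
  ⟨measurable_imageAvg hf.measurable
    ((hA.cocycleProd T.measurable m).comp (T.symm.measurable.iterate m)).stronglyMeasurable,
    hf.bounded.imp fun _ hC _ => abs_imageAvg_le hC _⟩

lemma pastAvg_succ_apply (m : ℕ) (ω : α) :
    pastAvg T A f (m + 1) (T ω) = pastAvg T A (fun v => f (A ω *ᵥ v)) m ω := by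
  simp only [pastAvg, imageAvg, pastProd_succ, T.symm_apply_apply, mulVec_mulVec]

variable (T A) in
/-- The Cesàro means of the past averages. -/
noncomputable def cesaroAvg (f : (Fin 2 → ℝ) → ℝ) (n : ℕ) (ω : α) : ℝ :=
  (n : ℝ)⁻¹ * ∑ m ∈ Finset.range n, pastAvg T A f m ω

lemma abs_cesaroAvg_le (hC : ∀ v, |f v| ≤ C) (n : ℕ) (ω : α) : |cesaroAvg T A f n ω| ≤ C := by
  have hC₀ : 0 ≤ C := (abs_nonneg _).trans (hC 0)
  have hsum : |∑ m ∈ Finset.range n, pastAvg T A f m ω| ≤ n * C :=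
    (Finset.abs_sum_le_sum_abs _ _).trans <|
      (Finset.sum_le_card_nsmul _ _ C fun _ _ => abs_imageAvg_le hC _).trans_eq (by simp)
  rw [cesaroAvg, abs_mul, abs_of_nonneg (by positivity)]
  calc (n : ℝ)⁻¹ * |∑ m ∈ Finset.range n, pastAvg T A f m ω| ≤ (n : ℝ)⁻¹ * (n * C) := by gcongr
    _ ≤ C := by rw [← mul_assoc]; exact mul_le_of_le_one_left hC₀ (inv_mul_le_one)

lemma bddMeas_cesaroAvg (hA : BddSL2 A) (hf : BddMeas f) (n : ℕ) : BddMeas (cesaroAvg T A f n) :=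
  (BddMeas.const _).mul (.sum _ fun m => bddMeas_pastAvg hA hf m)

lemma measurable_cesaroAvg (h𝒢 : IsFactorAlgebra 𝒢 T.symm (A ∘ T.symm)) (hf : Measurable f)
    (n : ℕ) : Measurable[𝒢] (cesaroAvg T A f n) :=
  measurable_const.mul (Finset.measurable_sum _ fun m _ =>
    measurable_imageAvg hf (stronglyMeasurable_pastProd h𝒢 m))

lemma integral_pastAvg_mul (hT : MeasurePreserving T μ μ) (hA : BddSL2 A) (hf : BddMeas f)
    {d : α → ℝ} (hd : BddMeas d) (m : ℕ) :
    ∫ ω, pastAvg T A f m ω * d ω ∂μ =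
      ∫ ω, d (T^[m] ω) * imageAvg f (cocycleProd T A m ω) ∂μ := by
  rw [← ((bddMeas_pastAvg hA hf m).mul hd).integral_comp (hT.iterate m)]
  simp only [pastAvg, pastProd_iterate, mul_comm]

variable (T A μ) in
/-- The Lyapunov exponent of the cocycle `A` over `T` exists and is nonpositive. The factor `2`,
harmless in the limit, makes the integrand nonnegative. -/
def NonposLyapunov : Prop :=
  ∃ L ≤ 0, Tendsto (fun n : ℕ => (n : ℝ)⁻¹ * ∫ ω, log (2 * ‖cocycleProd T A n ω‖) ∂μ) atTop (𝓝 L)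

variable [IsProbabilityMeasure μ]

lemma exists_isWeakLimit_cesaroAvg (hA : BddSL2 A) (hf : BddMeas f) :
    ∃ u, IsWeakLimit μ (cesaroAvg T A f) u := by
  obtain ⟨C, hC⟩ := hf.bounded
  exact exists_isWeakLimit (fun n => (bddMeas_cesaroAvg hA hf n).measurable)
    (abs_cesaroAvg_le hC)

lemma IsWeakLimit.integral_mul_le_sq (hT : MeasurePreserving T μ μ) (hA : BddSL2 A)
    (hL : NonposLyapunov T A μ) (h𝒢 : IsFactorAlgebra 𝒢 T A) (hf : BddMeas f) {u : α → ℝ}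
    (hu : IsWeakLimit μ (cesaroAvg T A f) u) {d : α → ℝ} (hd : BddMeas d)
    (hdT : Measurable[𝒢] fun ω => d (T ω)) (horth : OrthogonalTo 𝒢 μ d) {δ : ℝ} (hδ : δ ≤ 1 / 2)
    (hdf : ∀ ω v, |d ω * f v| ≤ δ) : ∫ ω, u ω * d ω ∂μ ≤ 2 * δ ^ 2 := by
  obtain ⟨L, hL₀, hL⟩ := hL
  have hle : ∫ ω, u ω * d ω ∂μ ≤ 3 * L + 2 * δ ^ 2 := by
    refine le_of_tendsto_of_tendsto (hu.tendsto d hd)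
      (((hL.mono_left Nat.hyperfilter_le_atTop).const_mul 3).add_const _) ?_
    filter_upwards [Nat.hyperfilter_le_atTop (eventually_gt_atTop 0)] with n hn
    have hn : (n : ℝ) ≠ 0 := mod_cast hn.ne'
    have hsum : ∫ ω, cesaroAvg T A f n ω * d ω ∂μ = (n : ℝ)⁻¹ * ∑ m ∈ Finset.range n,
        ∫ ω, d (T^[m] ω) * imageAvg f (cocycleProd T A m ω) ∂μ := by
      simp only [← integral_pastAvg_mul hT hA hf hd, cesaroAvg, mul_assoc, Finset.sum_mul]
      rw [integral_const_mul, integral_finsetSum _ fun m _ =>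
        ((bddMeas_pastAvg hA hf m).mul hd).integrable μ]
    calc ∫ ω, cesaroAvg T A f n ω * d ω ∂μ
        ≤ (n : ℝ)⁻¹ * (3 * ∫ ω, log (2 * ‖cocycleProd T A n ω‖) ∂μ + n * (2 * δ ^ 2)) := by
          rw [hsum]
          gcongr
          exact sum_integral_mul_imageAvg_le hT hA h𝒢 hf hd hdT horth hδ hdf n
      _ = 3 * ((n : ℝ)⁻¹ * ∫ ω, log (2 * ‖cocycleProd T A n ω‖) ∂μ) + 2 * δ ^ 2 := by
          rw [mul_add, inv_mul_cancel_left₀ hn, mul_left_comm]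
  linarith

lemma IsWeakLimit.integral_mul_nonpos (hT : MeasurePreserving T μ μ) (hA : BddSL2 A)
    (hL : NonposLyapunov T A μ) (h𝒢 : IsFactorAlgebra 𝒢 T A) (hf : BddMeas f) {u : α → ℝ}
    (hu : IsWeakLimit μ (cesaroAvg T A f) u) {d : α → ℝ} (hd : BddMeas d)
    (hdT : Measurable[𝒢] fun ω => d (T ω)) (horth : OrthogonalTo 𝒢 μ d) :
    ∫ ω, u ω * d ω ∂μ ≤ 0 := by
  obtain ⟨C, hC⟩ := hf.bounded
  obtain ⟨D, hD⟩ := hd.bounded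
  have hscale (t : ℝ) (ht : 0 < t) (htDC : t * (D * C) ≤ 1 / 2) :
      ∫ ω, u ω * d ω ∂μ ≤ t * (2 * (D * C) ^ 2) := by
    have h := hu.integral_mul_le_sq hT hA hL h𝒢 hf (d := fun ω => t * d ω)
      ((BddMeas.const t).mul hd) (measurable_const.mul hdT)
      (fun V hV hVm => by simp only [mul_assoc, integral_const_mul, horth V hV hVm, mul_zero])
      htDC fun ω v => by
        rw [mul_assoc, abs_mul, abs_mul, abs_of_pos ht]
        gcongr
        exacts [(abs_nonneg _).trans (hD ω), hD ω, hC v]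
    simp only [mul_left_comm _ t, integral_const_mul] at h
    refine le_of_mul_le_mul_left (h.trans_eq ?_) ht
    ring
  have hlim (c : ℝ) : Tendsto (fun t : ℝ => t * c) (𝓝[>] 0) (𝓝 0) :=
    ((continuous_mul_const c).tendsto' 0 0 (zero_mul c)).mono_left nhdsWithin_le_nhds
  refine ge_of_tendsto (hlim (2 * (D * C) ^ 2)) ?_
  filter_upwards [self_mem_nhdsWithin, (hlim (D * C)).eventually_le_const one_half_pos]
    with t ht htDC using hscale t ht htDC

end PastAverage

section InvariancePrinciple

variable {α : Type*} {𝒢 : MeasurableSpace α} [mα : MeasurableSpace α] {T : α ≃ᵐ α}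
  {A : α → Matrix (Fin 2) (Fin 2) ℝ}

namespace IsFactorAlgebra

lemma le_comap_symm (h : IsFactorAlgebra 𝒢 T A) : 𝒢 ≤ 𝒢.comap T.symm := by
  have := MeasurableSpace.comap_mono (g := T.symm) h.comap_le
  rwa [MeasurableSpace.comap_comp, T.self_comp_symm, MeasurableSpace.comap_id] at this

lemma comap_symm (h : IsFactorAlgebra 𝒢 T A) : IsFactorAlgebra (𝒢.comap T.symm) T A where
  le := (MeasurableSpace.comap_mono h.le).trans T.symm.measurable.comap_le
  comap_le := by
    rw [MeasurableSpace.comap_comp, T.symm_comp_self, MeasurableSpace.comap_id]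
    exact h.le_comap_symm
  stronglyMeasurable := h.stronglyMeasurable.mono h.le_comap_symm

lemma comap_symm_iterate (h : IsFactorAlgebra 𝒢 T A) (i : ℕ) :
    IsFactorAlgebra (𝒢.comap T.symm^[i]) T A := by
  induction i with
  | zero => rwa [Function.iterate_zero, MeasurableSpace.comap_id]
  | succ i ih =>
    rw [Function.iterate_succ, ← MeasurableSpace.comap_comp]
    exact ih.comap_symm

/-- The filtration of the preimages of a factor algebra under the powers of `T.symm`. -/
def filtration (h : IsFactorAlgebra 𝒢 T A) : Filtration ℕ mα where
  seq i := 𝒢.comap T.symm^[i]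
  mono' := monotone_nat_of_le_succ fun i => by
    rw [Function.iterate_succ, ← MeasurableSpace.comap_comp]
    exact (h.comap_symm_iterate i).le_comap_symm
  le' i := (h.comap_symm_iterate i).le

end IsFactorAlgebra

variable {f : (Fin 2 → ℝ) → ℝ} {u : α → ℝ} {μ : Measure α} [IsProbabilityMeasure μ]

lemma IsWeakLimit.condExp_comap_symm_ae_eq (hu : IsWeakLimit μ (cesaroAvg T A f) u)
    (hT : MeasurePreserving T μ μ) (hA : BddSL2 A) (hL : NonposLyapunov T A μ)
    (h𝒢 : IsFactorAlgebra 𝒢 T A) (hf : BddMeas f) :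
    μ[u | 𝒢.comap T.symm] =ᵐ[μ] μ[u | 𝒢] := by
  obtain ⟨v, hv, hvm, hvu⟩ := exists_bddMeas_ae_eq_condExp (μ := μ) h𝒢.le hu.bddMeas
  obtain ⟨w, hw, hwm, hwu⟩ := exists_bddMeas_ae_eq_condExp (μ := μ) h𝒢.comap_symm.le hu.bddMeas
  have hvm' : Measurable[𝒢.comap T.symm] v := hvm.mono h𝒢.le_comap_symm le_rfl
  have hwT : Measurable[𝒢] fun ω => w (T ω) - v (T ω) := by
    have hTm : Measurable[𝒢, 𝒢.comap T.symm] T := by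
      rw [measurable_iff_comap_le, MeasurableSpace.comap_comp, T.symm_comp_self,
        MeasurableSpace.comap_id]
    exact (hwm.sub hvm').comp hTm
  have huw := orthogonalTo_sub_of_ae_eq_condExp h𝒢.comap_symm.le hu.bddMeas hw hwu
  have hwv : OrthogonalTo 𝒢 μ fun ω => w ω - v ω :=
    orthogonalTo_sub_of_ae_eq_condExp h𝒢.le hw hv <| hvu.trans <|
      (condExp_condExp_of_le h𝒢.le_comap_symm h𝒢.comap_symm.le).symm.trans
        (condExp_congr_ae hwu.symm)
  have hsq : ∫ ω, (w ω - v ω) ^ 2 ∂μ = ∫ ω, u ω * (w ω - v ω) ∂μ := by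
    have hsplit ω : (w ω - v ω) ^ 2 =
        u ω * (w ω - v ω) - (u ω - w ω) * (w ω - v ω) - (w ω - v ω) * v ω := by ring
    have hu' := hu.bddMeas
    simp only [hsplit]
    rw [integral_sub (BddMeas.integrable (by fun_prop) μ) (BddMeas.integrable (by fun_prop) μ),
      integral_sub (BddMeas.integrable (by fun_prop) μ) (BddMeas.integrable (by fun_prop) μ),
      huw _ (hw.sub hv) (hwm.sub hvm'), hwv v hv hvm, sub_zero, sub_zero]
  have hnonpos := hu.integral_mul_nonpos hT hA hL h𝒢 hf (hw.sub hv) hwT hwv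
  exact hwu.symm.trans <| (ae_eq_of_integral_sq_sub_eq_zero hw hv <|
    le_antisymm (hsq.trans_le hnonpos) (integral_nonneg fun _ => sq_nonneg _)).trans hvu

theorem IsWeakLimit.ae_eq_condExp_of_nonposLyapunov (hu : IsWeakLimit μ (cesaroAvg T A f) u)
    (hT : MeasurePreserving T μ μ) (hA : BddSL2 A) (hL : NonposLyapunov T A μ)
    (h𝒢 : IsFactorAlgebra 𝒢 T A) (hgen : ⨆ i, 𝒢.comap T.symm^[i] = mα) (hf : BddMeas f) :
    u =ᵐ[μ] μ[u | 𝒢] := by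
  have hconst i : μ[u | 𝒢.comap T.symm^[i]] =ᵐ[μ] μ[u | 𝒢] := by
    induction i with
    | zero => rw [Function.iterate_zero, MeasurableSpace.comap_id]
    | succ i ih =>
      rw [Function.iterate_succ, ← MeasurableSpace.comap_comp]
      exact (hu.condExp_comap_symm_ae_eq hT hA hL (h𝒢.comap_symm_iterate i) hf).trans ih
  have hlevy := tendsto_ae_condExp (μ := μ) (ℱ := h𝒢.filtration) u
  rw [show ⨆ i, h𝒢.filtration i = mα from hgen, condExp_of_stronglyMeasurable le_rfl
    hu.bddMeas.measurable.stronglyMeasurable (hu.bddMeas.integrable μ)] at hlevy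
  filter_upwards [hlevy, ae_all_iff.2 hconst] with ω hlim hω
  exact tendsto_nhds_unique hlim (tendsto_const_nhds.congr fun i => (hω i).symm)

end InvariancePrinciple

section Mean

variable {ν : ((Fin 2 → ℝ) → ℝ) → ℝ} {f g : (Fin 2 → ℝ) → ℝ} {M N P : Matrix (Fin 2) (Fin 2) ℝ}
  {θ : ℝ}

/-- `ν` is a finitely additive mean on the bounded measurable functions of the plane, carrying no
mass at the origin. -/
structure IsMean (ν : ((Fin 2 → ℝ) → ℝ) → ℝ) : Prop where
  add : ∀ {f g}, BddMeas f → BddMeas g → ν (fun v => f v + g v) = ν f + ν g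
  const_mul : ∀ (c : ℝ) {f}, BddMeas f → ν (fun v => c * f v) = c * ν f
  mono : ∀ {f g}, BddMeas f → BddMeas g → (∀ v, v ≠ 0 → f v ≤ g v) → ν f ≤ ν g
  one : ν (fun _ => 1) = 1

/-- `ν` is invariant under the linear map of the plane with matrix `M`. -/
def InvariantUnder (ν : ((Fin 2 → ℝ) → ℝ) → ℝ) (M : Matrix (Fin 2) (Fin 2) ℝ) : Prop :=
  ∀ ⦃f⦄, BddMeas f → ν (fun v => f (M *ᵥ v)) = ν f

lemma InvariantUnder.map_of_mul_eq_mul (hM : InvariantUnder ν M) (h : P * M = N * P) :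
    InvariantUnder (fun f => ν fun v => f (P *ᵥ v)) N := fun f hf => by
  simp only [mulVec_mulVec, ← h, ← hM (hf.comp (measurable_mulVec P))]

namespace IsMean

lemma map (hν : IsMean ν) (hP : P.det ≠ 0) : IsMean fun f => ν fun v => f (P *ᵥ v) where
  add hf hg := hν.add (hf.comp (measurable_mulVec P)) (hg.comp (measurable_mulVec P))
  const_mul c _ hf := hν.const_mul c (hf.comp (measurable_mulVec P))
  mono hf hg hfg := hν.mono (hf.comp (measurable_mulVec P)) (hg.comp (measurable_mulVec P))
    fun _ hv => hfg _ fun h => hv (eq_zero_of_mulVec_eq_zero hP h)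
  one := hν.one

lemma const (hν : IsMean ν) (c : ℝ) : ν (fun _ => c) = c := by
  simpa only [mul_one, hν.one] using hν.const_mul c (BddMeas.const 1)

lemma sub (hν : IsMean ν) (hf : BddMeas f) (hg : BddMeas g) :
    ν (fun v => f v - g v) = ν f - ν g := by
  rw [eq_sub_iff_add_eq, ← hν.add (hf.sub hg) hg]
  simp only [sub_add_cancel]

lemma congr (hν : IsMean ν) (hf : BddMeas f) (hg : BddMeas g) (h : ∀ v, v ≠ 0 → f v = g v) :
    ν f = ν g :=
  le_antisymm (hν.mono hf hg fun v hv => (h v hv).le) (hν.mono hg hf fun v hv => (h v hv).ge)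

end IsMean

lemma eq_zero_of_rotation_fixed {x y : ℝ} (hθ : cos θ ≠ 1) (hx : cos θ * x - sin θ * y = x)
    (hy : sin θ * x + cos θ * y = y) : x = 0 ∧ y = 0 := by
  have hdet : 0 < (1 - cos θ) ^ 2 + sin θ ^ 2 := by
    have : 1 - cos θ ≠ 0 := sub_ne_zero.2 hθ.symm
    positivity
  constructor
  · refine (mul_eq_zero.1 (?_ : ((1 - cos θ) ^ 2 + sin θ ^ 2) * x = 0)).resolve_left hdet.ne'
    linear_combination -(1 - cos θ) * hx + sin θ * hy
  · refine (mul_eq_zero.1 (?_ : ((1 - cos θ) ^ 2 + sin θ ^ 2) * y = 0)).resolve_left hdet.ne'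
    linear_combination -(1 - cos θ) * hy - sin θ * hx

lemma IsMean.eq_zero_of_rotation (hν : IsMean ν) (hM : InvariantUnder ν M) (hf : BddMeas f)
    (hg : BddMeas g) (hθ : cos θ ≠ 1) (hfM : ∀ v, f (M *ᵥ v) = cos θ * f v - sin θ * g v)
    (hgM : ∀ v, g (M *ᵥ v) = sin θ * f v + cos θ * g v) : ν f = 0 ∧ ν g = 0 := by
  refine eq_zero_of_rotation_fixed hθ ?_ ?_
  · rw [← hν.const_mul _ hf, ← hν.const_mul _ hg, ← hν.sub (by fun_prop) (by fun_prop), ← hM hf]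
    simp only [hfM]
  · rw [← hν.const_mul _ hf, ← hν.const_mul _ hg, ← hν.add (by fun_prop) (by fun_prop), ← hM hg]
    simp only [hgM]

end Mean

section Conformal

variable {ν : ((Fin 2 → ℝ) → ℝ) → ℝ} {N : Matrix (Fin 2) (Fin 2) ℝ} {v : Fin 2 → ℝ} {θ : ℝ}

/-- The square of the Euclidean norm. -/
def normSq (v : Fin 2 → ℝ) : ℝ := v 0 ^ 2 + v 1 ^ 2

/-- The cosine of the doubled argument of `v`. -/
noncomputable def cosTwoArg (v : Fin 2 → ℝ) : ℝ := (v 0 ^ 2 - v 1 ^ 2) / normSq v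

/-- The sine of the doubled argument of `v`. -/
noncomputable def sinTwoArg (v : Fin 2 → ℝ) : ℝ := 2 * v 0 * v 1 / normSq v

/-- The matrix of the rotation by `θ`. -/
noncomputable def rotationMat (θ : ℝ) : Matrix (Fin 2) (Fin 2) ℝ :=
  !![cos θ, -sin θ; sin θ, cos θ]

lemma normSq_nonneg (v : Fin 2 → ℝ) : 0 ≤ normSq v := by unfold normSq; positivity

lemma normSq_pos (hv : v ≠ 0) : 0 < normSq v := by
  refine (normSq_nonneg v).lt_of_ne' fun h => hv ?_
  obtain ⟨h₀, h₁⟩ := (add_eq_zero_iff_of_nonneg (sq_nonneg _) (sq_nonneg _)).1 h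
  exact funext (Fin.forall_fin_two.2
    ⟨pow_eq_zero_iff two_ne_zero |>.1 h₀, pow_eq_zero_iff two_ne_zero |>.1 h₁⟩)

@[fun_prop]
lemma measurable_normSq : Measurable normSq := by unfold normSq; fun_prop

lemma abs_div_normSq_le_one {x : ℝ} (hx : |x| ≤ normSq v) : |x / normSq v| ≤ 1 := by
  rw [abs_div, abs_of_nonneg (normSq_nonneg v)]
  exact div_le_one_of_le₀ hx (normSq_nonneg v)

@[fun_prop]
lemma bddMeas_cosTwoArg : BddMeas cosTwoArg where
  measurable := by unfold cosTwoArg; fun_prop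
  bounded := ⟨1, fun v => abs_div_normSq_le_one <| abs_le.2 <| by
    constructor <;> unfold normSq <;> nlinarith [sq_nonneg (v 0), sq_nonneg (v 1)]⟩

@[fun_prop]
lemma bddMeas_sinTwoArg : BddMeas sinTwoArg where
  measurable := by unfold sinTwoArg; fun_prop
  bounded := ⟨1, fun v => abs_div_normSq_le_one <| abs_le.2 <| by
    constructor <;> unfold normSq <;> nlinarith [sq_nonneg (v 0 + v 1), sq_nonneg (v 0 - v 1)]⟩

lemma cosTwoArg_sq_add_sinTwoArg_sq (hv : v ≠ 0) : cosTwoArg v ^ 2 + sinTwoArg v ^ 2 = 1 := by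
  have h := (normSq_pos hv).ne'
  unfold cosTwoArg sinTwoArg
  field_simp
  unfold normSq
  ring

lemma rotationMat_mulVec_zero : (rotationMat θ *ᵥ v) 0 = cos θ * v 0 - sin θ * v 1 := by
  simp [rotationMat, mulVec, dotProduct, Fin.sum_univ_two, sub_eq_add_neg]

lemma rotationMat_mulVec_one : (rotationMat θ *ᵥ v) 1 = sin θ * v 0 + cos θ * v 1 := by
  simp [rotationMat, mulVec, dotProduct, Fin.sum_univ_two]

lemma normSq_rotationMat_mulVec : normSq (rotationMat θ *ᵥ v) = normSq v := by
  rw [normSq, rotationMat_mulVec_zero, rotationMat_mulVec_one, normSq]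
  linear_combination (v 0 ^ 2 + v 1 ^ 2) * sin_sq_add_cos_sq θ

lemma cosTwoArg_rotationMat_mulVec (v : Fin 2 → ℝ) : cosTwoArg (rotationMat θ *ᵥ v) =
    cos (2 * θ) * cosTwoArg v - sin (2 * θ) * sinTwoArg v := by
  rw [cosTwoArg, normSq_rotationMat_mulVec, rotationMat_mulVec_zero, rotationMat_mulVec_one,
    cos_two_mul', sin_two_mul, cosTwoArg, sinTwoArg]
  ring

lemma sinTwoArg_rotationMat_mulVec (v : Fin 2 → ℝ) : sinTwoArg (rotationMat θ *ᵥ v) =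
    sin (2 * θ) * cosTwoArg v + cos (2 * θ) * sinTwoArg v := by
  rw [sinTwoArg, normSq_rotationMat_mulVec, rotationMat_mulVec_zero, rotationMat_mulVec_one,
    cos_two_mul', sin_two_mul, cosTwoArg, sinTwoArg]
  ring

lemma IsMean.cosTwoArg_sinTwoArg_eq_zero (hν : IsMean ν) (hR : InvariantUnder ν (rotationMat θ))
    (hθ : sin (2 * θ) ≠ 0) : ν cosTwoArg = 0 ∧ ν sinTwoArg = 0 :=
  hν.eq_zero_of_rotation hR bddMeas_cosTwoArg bddMeas_sinTwoArg (θ := 2 * θ)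
    (fun h => hθ (sin_eq_zero_iff_cos_eq.2 (.inl h)))
    cosTwoArg_rotationMat_mulVec sinTwoArg_rotationMat_mulVec

lemma IsMean.second_harmonics_eq_zero (hν : IsMean ν) (hR : InvariantUnder ν (rotationMat θ))
    (hθ : sin (2 * θ) ≠ 0) : ν (fun v => cosTwoArg v ^ 2 - sinTwoArg v ^ 2) = 0 ∧
      ν (fun v => 2 * cosTwoArg v * sinTwoArg v) = 0 := by
  have hcos : cos (2 * (2 * θ)) ≠ 1 := by
    rw [cos_two_mul_eq_one_sub]
    simpa using hθ
  refine hν.eq_zero_of_rotation hR (by fun_prop) (by fun_prop) hcos ?_ ?_ <;> intro v <;>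
    rw [cosTwoArg_rotationMat_mulVec, sinTwoArg_rotationMat_mulVec, cos_two_mul' (2 * θ),
      sin_two_mul (2 * θ)] <;> ring

/-- Half the squared Hilbert-Schmidt norm: the mean of `stretch N` over the circle. -/
noncomputable def stretchMean (N : Matrix (Fin 2) (Fin 2) ℝ) : ℝ :=
  (N 0 0 ^ 2 + N 1 0 ^ 2 + N 0 1 ^ 2 + N 1 1 ^ 2) / 2

/-- The coefficient of `cosTwoArg` in `stretch N`. -/
noncomputable def stretchCos (N : Matrix (Fin 2) (Fin 2) ℝ) : ℝ :=
  (N 0 0 ^ 2 + N 1 0 ^ 2 - N 0 1 ^ 2 - N 1 1 ^ 2) / 2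

/-- The coefficient of `sinTwoArg` in `stretch N`. -/
noncomputable def stretchSin (N : Matrix (Fin 2) (Fin 2) ℝ) : ℝ := N 0 0 * N 0 1 + N 1 0 * N 1 1

/-- The factor by which `N` multiplies `normSq v`, as a trigonometric polynomial in the doubled
argument of `v`. -/
noncomputable def stretch (N : Matrix (Fin 2) (Fin 2) ℝ) (v : Fin 2 → ℝ) : ℝ :=
  stretchMean N + stretchCos N * cosTwoArg v + stretchSin N * sinTwoArg v

@[fun_prop]
lemma bddMeas_stretch (N : Matrix (Fin 2) (Fin 2) ℝ) : BddMeas (stretch N) := by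
  unfold stretch
  fun_prop

lemma normSq_mulVec (hv : v ≠ 0) : normSq (N *ᵥ v) = stretch N v * normSq v := by
  have h := (normSq_pos hv).ne'
  unfold stretch cosTwoArg sinTwoArg
  field_simp
  simp only [normSq, mulVec, dotProduct, Fin.sum_univ_two, stretchMean, stretchCos, stretchSin]
  ring

lemma stretch_pos (hN : N.det = 1) (hv : v ≠ 0) : 0 < stretch N v :=
  pos_of_mul_pos_left (normSq_mulVec hv ▸ normSq_pos (mulVec_ne_zero_of_det_eq_one hN hv))
    (normSq_nonneg v)

lemma stretch_adjugate_mulVec (hN : N.det = 1) (hv : v ≠ 0) :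
    stretch N.adjugate (N *ᵥ v) = (stretch N v)⁻¹ := by
  have h := normSq_mulVec (N := N.adjugate) (mulVec_ne_zero_of_det_eq_one hN hv)
  rw [mulVec_mulVec, adjugate_mul, hN, one_smul, one_mulVec, normSq_mulVec hv, ← mul_assoc] at h
  exact eq_inv_of_mul_eq_one_left
    (mul_right_cancel₀ (normSq_pos hv).ne' (h.symm.trans (one_mul _).symm))

lemma stretchMean_adjugate (N : Matrix (Fin 2) (Fin 2) ℝ) :
    stretchMean N.adjugate = stretchMean N := by
  simp only [stretchMean, adjugate_fin_two, of_apply, cons_val', cons_val_zero, cons_val_one,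
    cons_val_fin_one]
  ring

lemma stretchMean_sq (hN : N.det = 1) :
    stretchMean N ^ 2 = 1 + stretchCos N ^ 2 + stretchSin N ^ 2 := by
  rw [det_fin_two] at hN
  unfold stretchMean stretchCos stretchSin
  linear_combination (N 0 0 * N 1 1 - N 0 1 * N 1 0 + 1) * hN

lemma IsMean.stretch_eq (hν : IsMean ν) (hR : InvariantUnder ν (rotationMat θ))
    (hθ : sin (2 * θ) ≠ 0) : ν (stretch N) = stretchMean N := by
  obtain ⟨hc, hs⟩ := hν.cosTwoArg_sinTwoArg_eq_zero hR hθ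
  unfold stretch
  rw [hν.add (by fun_prop) (by fun_prop), hν.add (by fun_prop) (by fun_prop), hν.const,
    hν.const_mul _ bddMeas_cosTwoArg, hν.const_mul _ bddMeas_sinTwoArg, hc, hs]
  ring

/-- Twice the excess of `stretchMean N` over the arithmetic mean of the stretches of `v` under `N`
and of `N *ᵥ v` under the inverse of `N`. -/
noncomputable def stretchGap (N : Matrix (Fin 2) (Fin 2) ℝ) (v : Fin 2 → ℝ) : ℝ :=
  2 * stretchMean N - (stretch N v + stretch N.adjugate (N *ᵥ v))

@[fun_prop]
lemma bddMeas_stretchGap (N : Matrix (Fin 2) (Fin 2) ℝ) : BddMeas (stretchGap N) := by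
  have := (bddMeas_stretch N.adjugate).comp (measurable_mulVec N)
  unfold stretchGap
  fun_prop

lemma IsMean.stretchGap_eq_zero (hν : IsMean ν) (hR : InvariantUnder ν (rotationMat θ))
    (hθ : sin (2 * θ) ≠ 0) (hM : InvariantUnder ν N) : ν (stretchGap N) = 0 := by
  have hadj := (bddMeas_stretch N.adjugate).comp (measurable_mulVec N)
  unfold stretchGap
  rw [hν.sub (by fun_prop) (by fun_prop), hν.const, hν.add (by fun_prop) hadj,
    hM (bddMeas_stretch _), hν.stretch_eq hR hθ, hν.stretch_eq hR hθ, stretchMean_adjugate]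
  ring

lemma sq_le_mul_stretchGap (hN : N.det = 1) (hv : v ≠ 0) :
    (stretchCos N * sinTwoArg v - stretchSin N * cosTwoArg v) ^ 2 ≤
      2 * stretchMean N * stretchGap N v := by
  have hpos := stretch_pos hN hv
  have heq : (stretchCos N * sinTwoArg v - stretchSin N * cosTwoArg v) ^ 2 =
      stretch N v * stretchGap N v := by
    rw [stretchGap, stretch_adjugate_mulVec hN hv, mul_sub, mul_add, mul_inv_cancel₀ hpos.ne',
      stretch]
    linear_combination (stretchCos N ^ 2 + stretchSin N ^ 2) * cosTwoArg_sq_add_sinTwoArg_sq hv -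
      stretchMean_sq hN
  have hgap : 0 ≤ stretchGap N v := nonneg_of_mul_nonneg_right (heq ▸ sq_nonneg _) hpos
  have hle : stretch N v ≤ 2 * stretchMean N := by
    have := inv_pos.2 hpos
    rw [stretchGap, stretch_adjugate_mulVec hN hv] at hgap
    linarith
  exact heq.trans_le (mul_le_mul_of_nonneg_right hle hgap)

lemma IsMean.sq_eq (hν : IsMean ν) (hR : InvariantUnder ν (rotationMat θ))
    (hθ : sin (2 * θ) ≠ 0) (a b : ℝ) :
    ν (fun v => (a * sinTwoArg v - b * cosTwoArg v) ^ 2) = (a ^ 2 + b ^ 2) / 2 := by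
  obtain ⟨hc, hs⟩ := hν.second_harmonics_eq_zero hR hθ
  calc ν (fun v => (a * sinTwoArg v - b * cosTwoArg v) ^ 2)
      = ν (fun v => (a ^ 2 + b ^ 2) / 2 +
          ((b ^ 2 - a ^ 2) / 2 * (cosTwoArg v ^ 2 - sinTwoArg v ^ 2) +
            -(a * b) * (2 * cosTwoArg v * sinTwoArg v))) :=
        hν.congr (by fun_prop) (by fun_prop) fun v hv => by
          linear_combination ((a ^ 2 + b ^ 2) / 2) * cosTwoArg_sq_add_sinTwoArg_sq hv
    _ = (a ^ 2 + b ^ 2) / 2 := by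
        rw [hν.add (by fun_prop) (by fun_prop), hν.add (by fun_prop) (by fun_prop), hν.const,
          hν.const_mul _ (by fun_prop), hν.const_mul _ (by fun_prop), hc, hs]
        ring

theorem IsMean.transpose_mul_self_eq_one (hν : IsMean ν) (hR : InvariantUnder ν (rotationMat θ))
    (hθ : sin (2 * θ) ≠ 0) (hM : InvariantUnder ν N) (hN : N.det = 1) : Nᵀ * N = 1 := by
  have hle := hν.mono (by fun_prop) (by fun_prop) fun v => sq_le_mul_stretchGap (v := v) hN
  rw [hν.sq_eq hR hθ, hν.const_mul _ (bddMeas_stretchGap N), hν.stretchGap_eq_zero hR hθ hM,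
    mul_zero] at hle
  have hcos : stretchCos N = 0 := by nlinarith [sq_nonneg (stretchCos N), sq_nonneg (stretchSin N)]
  have hsin : stretchSin N = 0 := by nlinarith [sq_nonneg (stretchCos N), sq_nonneg (stretchSin N)]
  have hmean : stretchMean N = 1 := by
    have hnn : 0 ≤ stretchMean N := by unfold stretchMean; positivity
    have hsq := stretchMean_sq hN
    rw [hcos, hsin] at hsq
    nlinarith
  unfold stretchCos at hcos
  unfold stretchSin at hsin
  unfold stretchMean at hmean
  ext i j
  fin_cases i <;> fin_cases j <;>
    simp only [Fin.zero_eta, Fin.mk_one, mul_apply, transpose_apply, Fin.sum_univ_two,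
      one_apply_eq, ne_eq, zero_ne_one, one_ne_zero, not_false_eq_true, one_apply_ne] <;>
    linarith

end Conformal

section Commute

variable {ν : ((Fin 2 → ℝ) → ℝ) → ℝ} {E M N P : Matrix (Fin 2) (Fin 2) ℝ} {θ : ℝ}

lemma commute_rotationMat (hN : Nᵀ * N = 1) (hdet : N.det = 1) : Commute N (rotationMat θ) := by
  have hadj : Nᵀ = N.adjugate :=
    left_inv_eq_right_inv hN (by rw [mul_adjugate, hdet, one_smul])
  rw [adjugate_fin_two] at hadj
  have h₀ : N 0 0 = N 1 1 := congr_fun₂ hadj 0 0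
  have h₁ : N 1 0 = -N 0 1 := congr_fun₂ hadj 0 1
  ext i j
  fin_cases i <;> fin_cases j <;>
    simp only [rotationMat, mul_apply, Fin.sum_univ_two, of_apply, cons_val', cons_val_zero,
      cons_val_one, cons_val_fin_one, Fin.zero_eta, Fin.mk_one, h₀, h₁] <;> ring

theorem IsMean.commute_of_conj_rotationMat (hν : IsMean ν) (hE : InvariantUnder ν E)
    (hM : InvariantUnder ν M) (hdet : M.det = 1) (hP : P.det ≠ 0)
    (hPE : P * E = rotationMat θ * P) (hθ : sin (2 * θ) ≠ 0) : Commute M E := by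
  have hPu : IsUnit P.det := hP.isUnit
  have hPM : P * M = P * M * P⁻¹ * P := (nonsing_inv_mul_cancel_right _ _ hPu).symm
  have hdetN : (P * M * P⁻¹).det = 1 := by
    rw [det_conj ((isUnit_iff_isUnit_det P).2 hPu), hdet]
  have hcomm : Commute (P * M * P⁻¹) (rotationMat θ) :=
    commute_rotationMat ((hν.map hP).transpose_mul_self_eq_one (hE.map_of_mul_eq_mul hPE) hθ
      (hM.map_of_mul_eq_mul hPM) hdetN) hdetN
  refine ((isUnit_iff_isUnit_det P).2 hPu).mul_left_cancel ?_
  calc P * (M * E) = P * M * P⁻¹ * (P * E) := by rw [← mul_assoc, ← mul_assoc, ← hPM]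
    _ = rotationMat θ * (P * M * P⁻¹ * P) := by rw [hPE, ← mul_assoc, hcomm.eq, mul_assoc]
    _ = P * (E * M) := by rw [← hPM, ← mul_assoc, ← hPE, mul_assoc]

end Commute

section TransferMat

variable {ν : ((Fin 2 → ℝ) → ℝ) → ℝ} {a b i j : ℝ}

/-- The transfer matrix from the letter `i` to the letter `j`. -/
noncomputable def transferMat (k i j : ℝ) : Matrix (Fin 2) (Fin 2) ℝ :=
  √(j / i) • !![(j + i) / j * cos k, -(i / j); 1, 0]

lemma transferMat_mul_transferMat (k : ℝ) (ha : 0 < a) (hb : 0 < b) :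
    transferMat k b a * transferMat k a b =
      !![(a + b) / a * ((a + b) / b) * cos k ^ 2 - b / a, -((a + b) / b * cos k);
        (a + b) / b * cos k, -(a / b)] := by
  have h : √(a / b) * √(b / a) = 1 := by
    rw [← sqrt_mul (by positivity), div_mul_div_cancel₀ hb.ne', div_self ha.ne', sqrt_one]
  rw [transferMat, transferMat, Matrix.smul_mul, Matrix.mul_smul, smul_smul, h, one_smul,
    mul_fin_two]
  simp only [EmbeddingLike.apply_eq_iff_eq, vecCons_inj, and_true]
  refine ⟨⟨?_, ?_⟩, ?_, ?_⟩ <;> field_simp <;> ring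

lemma transferMat_self (k : ℝ) (ha : 0 < a) : transferMat k a a = !![2 * cos k, -1; 1, 0] := by
  rw [transferMat, div_self ha.ne', sqrt_one, one_smul, ← two_mul, mul_div_cancel_right₀ _ ha.ne']

lemma det_transferMat (k : ℝ) (hi : 0 < i) (hj : 0 < j) : (transferMat k i j).det = 1 := by
  rw [transferMat, det_smul, Fintype.card_fin, sq_sqrt (by positivity), det_fin_two_of]
  field_simp
  ring

theorem IsMean.eq_of_invariantUnder_transferMat (hν : IsMean ν) {k : ℝ} (hk : sin (2 * k) ≠ 0)
    (ha : 0 < a) (hb : 0 < b) (haa : InvariantUnder ν (transferMat k a a))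
    (hab : InvariantUnder ν (transferMat k b a * transferMat k a b)) : a = b := by
  have hsin : sin k ≠ 0 := fun h => hk (by rw [sin_two_mul, h, mul_zero, zero_mul])
  have hdet : (transferMat k b a * transferMat k a b).det = 1 := by
    rw [det_mul, det_transferMat k hb ha, det_transferMat k ha hb, one_mul]
  have hconj : !![1, -cos k; 0, sin k] * transferMat k a a =
      rotationMat k * !![1, -cos k; 0, sin k] := by
    rw [transferMat_self k ha, rotationMat, mul_fin_two, mul_fin_two]
    simp only [EmbeddingLike.apply_eq_iff_eq, vecCons_inj, and_true]
    refine ⟨⟨by ring, ?_⟩, by ring, by ring⟩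
    linear_combination sin_sq_add_cos_sq k
  have hcomm := hν.commute_of_conj_rotationMat haa hab hdet (by simpa using hsin) hconj hk
  rw [transferMat_mul_transferMat k ha hb, transferMat_self k ha] at hcomm
  have h := congr_fun₂ hcomm.eq 1 0
  simp only [mul_apply, Fin.sum_univ_two, of_apply, cons_val', cons_val_zero, cons_val_one,
    cons_val_fin_one] at h
  field_simp at h
  have h' : (a + b) * sin k ^ 2 * (a - b) = 0 := by
    linear_combination -h + (a + b) * (a - b) * sin_sq_add_cos_sq k
  exact sub_eq_zero.1 ((mul_eq_zero.1 h').resolve_left (by positivity))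

end TransferMat

section CesaroMean

open ProbabilityTheory

variable {α : Type*} [mα : MeasurableSpace α] {T : α ≃ᵐ α} {A : α → Matrix (Fin 2) (Fin 2) ℝ}
  {M : Matrix (Fin 2) (Fin 2) ℝ} {f g : (Fin 2 → ℝ) → ℝ} {C : ℝ} {μ : Measure α} {E F : Set α}

lemma cesaroAvg_add (hf : BddMeas f) (hg : BddMeas g) (n : ℕ) (ω : α) :
    cesaroAvg T A (fun v => f v + g v) n ω = cesaroAvg T A f n ω + cesaroAvg T A g n ω := by
  simp only [cesaroAvg, ← mul_add, ← Finset.sum_add_distrib, pastAvg, imageAvg]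
  congr! with m
  exact integral_add ((hf.comp (measurable_mulVec _)).integrable _)
    ((hg.comp (measurable_mulVec _)).integrable _)

lemma cesaroAvg_const_mul (c : ℝ) (f : (Fin 2 → ℝ) → ℝ) (n : ℕ) (ω : α) :
    cesaroAvg T A (fun v => c * f v) n ω = c * cesaroAvg T A f n ω := by
  simp only [cesaroAvg, pastAvg, imageAvg, integral_const_mul, ← Finset.mul_sum, mul_left_comm]

lemma cesaroAvg_mono (hA : ∀ ω, (A ω).det = 1) (hf : BddMeas f) (hg : BddMeas g)
    (hfg : ∀ v, v ≠ 0 → f v ≤ g v) (n : ℕ) (ω : α) :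
    cesaroAvg T A f n ω ≤ cesaroAvg T A g n ω := by
  refine mul_le_mul_of_nonneg_left (Finset.sum_le_sum fun m _ => ?_) (by positivity)
  refine integral_mono_ae ((hf.comp (measurable_mulVec _)).integrable _)
    ((hg.comp (measurable_mulVec _)).integrable _) ?_
  filter_upwards [ae_heavyTail_ne_zero] with x hx
  exact hfg _ (mulVec_ne_zero_of_det_eq_one (det_cocycleProd hA _ _) hx)

lemma cesaroAvg_one {n : ℕ} (hn : n ≠ 0) (ω : α) : cesaroAvg T A (fun _ => 1) n ω = 1 := by
  simp [cesaroAvg, pastAvg, imageAvg, hn]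

lemma abs_cesaroAvg_apply_sub_le (hC : ∀ v, |f v| ≤ C) (n : ℕ) (ω : α) :
    |cesaroAvg T A f n (T ω) - cesaroAvg T A (fun v => f (A ω *ᵥ v)) n ω| ≤
      2 * C * (n : ℝ)⁻¹ := by
  cases n with
  | zero => simp [cesaroAvg]
  | succ n =>
    rw [cesaroAvg, cesaroAvg, ← mul_sub, Finset.sum_range_succ', Finset.sum_range_succ]
    simp only [pastAvg_succ_apply]
    rw [add_sub_add_left_eq_sub, abs_mul, abs_of_nonneg (by positivity), mul_comm (2 * C),
      two_mul]
    gcongr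
    exact (abs_sub _ _).trans
      (add_le_add (abs_imageAvg_le hC _) (abs_imageAvg_le (fun _ => hC _) _))

lemma integral_cond (μ : Measure α) (E : Set α) (u : α → ℝ) :
    ∫ ω, u ω ∂μ[|E] = (μ E)⁻¹.toReal * ∫ ω in E, u ω ∂μ := by
  rw [ProbabilityTheory.cond, integral_smul_measure, smul_eq_mul]

lemma IsWeakLimit.tendsto_integral_cond {G : ℕ → α → ℝ} {u : α → ℝ} (hu : IsWeakLimit μ G u)
    (hE : MeasurableSet E) :
    Tendsto (fun n => ∫ ω, G n ω ∂μ[|E]) (hyperfilter ℕ) (𝓝 (∫ ω, u ω ∂μ[|E])) := by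
  have h := hu.tendsto _ (.indicator_one hE)
  simp only [integral_mul_indicator_one _ hE] at h
  simpa only [integral_cond] using h.const_mul _

variable (T A μ E) in
/-- The limit, along a fixed nonprincipal ultrafilter, of the expectations given `E` of the Cesàro
means of the past averages of `f`. -/
noncomputable def cesaroMean (f : (Fin 2 → ℝ) → ℝ) : ℝ :=
  limUnder (hyperfilter ℕ : Filter ℕ) fun n => ∫ ω, cesaroAvg T A f n ω ∂μ[|E]

lemma IsWeakLimit.cesaroMean_eq {u : α → ℝ} (hu : IsWeakLimit μ (cesaroAvg T A f) u)
    (hE : MeasurableSet E) : cesaroMean T A μ E f = ∫ ω, u ω ∂μ[|E] :=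
  (hu.tendsto_integral_cond hE).limUnder_eq

variable [IsProbabilityMeasure μ]

lemma tendsto_cesaroMean (hA : BddSL2 A) (hf : BddMeas f) (hE : MeasurableSet E) :
    Tendsto (fun n => ∫ ω, cesaroAvg T A f n ω ∂μ[|E]) (hyperfilter ℕ)
      (𝓝 (cesaroMean T A μ E f)) :=
  let ⟨_, hu⟩ := exists_isWeakLimit_cesaroAvg hA hf
  tendsto_nhds_limUnder ⟨_, hu.tendsto_integral_cond hE⟩

lemma isMean_cesaroMean (hA : BddSL2 A) (hE : MeasurableSet E) (hμE : μ E ≠ 0) :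
    IsMean (cesaroMean T A μ E) where
  add hf hg := by
    refine tendsto_nhds_unique (tendsto_cesaroMean hA (hf.add hg) hE)
      (((tendsto_cesaroMean hA hf hE).add (tendsto_cesaroMean hA hg hE)).congr fun n => ?_)
    simp only [cesaroAvg_add hf hg]
    exact (integral_add ((bddMeas_cesaroAvg hA hf n).integrable _)
      ((bddMeas_cesaroAvg hA hg n).integrable _)).symm
  const_mul c f hf := by
    refine tendsto_nhds_unique (tendsto_cesaroMean hA ((BddMeas.const c).mul hf) hE)
      (((tendsto_cesaroMean hA hf hE).const_mul c).congr fun n => ?_)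
    simp only [cesaroAvg_const_mul, integral_const_mul]
  mono hf hg hfg :=
    le_of_tendsto_of_tendsto' (tendsto_cesaroMean hA hf hE) (tendsto_cesaroMean hA hg hE) fun n =>
      integral_mono ((bddMeas_cesaroAvg hA hf n).integrable _)
        ((bddMeas_cesaroAvg hA hg n).integrable _) (cesaroAvg_mono hA.det_eq_one hf hg hfg n)
  one := by
    have := cond_isProbabilityMeasure hμE
    refine tendsto_nhds_unique (tendsto_cesaroMean hA (BddMeas.const 1) hE)
      (tendsto_const_nhds.congr' ?_)
    filter_upwards [Nat.hyperfilter_le_atTop (eventually_ne_atTop 0)] with n hn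
    simp only [cesaroAvg_one hn, integral_const, probReal_univ, one_smul]

lemma cesaroMean_symm_preimage (hT : MeasurePreserving T μ μ) (hA : BddSL2 A) (hf : BddMeas f)
    (hE : MeasurableSet E) (hAE : ∀ ω ∈ E, A ω = M) :
    cesaroMean T A μ (T.symm ⁻¹' E) f = cesaroMean T A μ E fun v => f (M *ᵥ v) := by
  obtain ⟨C, hC⟩ := hf.bounded
  have hfM := hf.comp (measurable_mulVec M)
  have hpre (u : α → ℝ) : ∫ ω, u ω ∂μ[|T.symm ⁻¹' E] = ∫ ω, u (T ω) ∂μ[|E] := by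
    have hE' : T ⁻¹' (T.symm ⁻¹' E) = E := by ext; simp
    rw [integral_cond, integral_cond,
      ← hT.setIntegral_preimage_emb T.measurableEmbedding, hE',
      ← hT.measure_preimage (T.symm.measurable hE).nullMeasurableSet, hE']
  have hlim : Tendsto (fun n : ℕ => 2 * C * (n : ℝ)⁻¹) (hyperfilter ℕ) (𝓝 0) := by
    simpa using (tendsto_inv_atTop_nhds_zero_nat.const_mul (2 * C)).mono_left
      Nat.hyperfilter_le_atTop
  refine sub_eq_zero.1 (tendsto_nhds_unique ((tendsto_cesaroMean hA hf (T.symm.measurable hE)).sub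
    (tendsto_cesaroMean hA hfM hE)) (squeeze_zero_norm (fun n => ?_) hlim))
  rw [hpre, ← integral_sub (((bddMeas_cesaroAvg hA hf n).comp T.measurable).integrable _)
    ((bddMeas_cesaroAvg hA hfM n).integrable _)]
  refine (norm_integral_le_of_norm_le_const (C := 2 * C * (n : ℝ)⁻¹) ?_).trans ?_
  · filter_upwards [ae_cond_mem hE] with ω hω
    simpa only [hAE ω hω, norm_eq_abs] using
      abs_cesaroAvg_apply_sub_le (T := T) (A := A) hC n ω
  · have hC₀ : 0 ≤ C := (abs_nonneg _).trans (hC 0)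
    exact mul_le_of_le_one_right (by positivity) measureReal_le_one

variable (T A μ F) in
/-- The weak limits of the Cesàro means of past averages are almost everywhere constant on `F`. -/
def ConstCesaroLimitOn : Prop :=
  ∀ ⦃f⦄, BddMeas f → ∃ u c, IsWeakLimit μ (cesaroAvg T A f) u ∧ u =ᵐ[μ.restrict F] fun _ => c

lemma ConstCesaroLimitOn.cesaroMean_eq_of_subset (h : ConstCesaroLimitOn T A μ F)
    (hf : BddMeas f) (hE : MeasurableSet E) (hF : MeasurableSet F) (hEF : E ⊆ F) (hμE : μ E ≠ 0) :
    cesaroMean T A μ E f = cesaroMean T A μ F f := by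
  obtain ⟨u, c, hu, huc⟩ := h hf
  have hconst {D : Set α} (hD : MeasurableSet D) (hDF : D ⊆ F) (hμD : μ D ≠ 0) :
      cesaroMean T A μ D f = c := by
    have := cond_isProbabilityMeasure hμD
    rw [hu.cesaroMean_eq hD, integral_cond,
      integral_congr_ae (ae_restrict_of_ae_restrict_of_subset hDF huc), ← integral_cond,
      integral_const, probReal_univ, one_smul]
  rw [hconst hE hEF hμE, hconst hF Subset.rfl fun h => hμE (measure_mono_null hEF h)]

theorem cesaroMean_comp_mulVec (hT : MeasurePreserving T μ μ) (hA : BddSL2 A) (hf : BddMeas f)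
    (hE : MeasurableSet E) (hF : MeasurableSet F) (hEc : ConstCesaroLimitOn T A μ E)
    (hFc : ConstCesaroLimitOn T A μ F) (hAEF : ∀ ω ∈ E ∩ T ⁻¹' F, A ω = M)
    (hμ : μ (E ∩ T ⁻¹' F) ≠ 0) :
    cesaroMean T A μ E (fun v => f (M *ᵥ v)) = cesaroMean T A μ F f := by
  have hEF : MeasurableSet (E ∩ T ⁻¹' F) := hE.inter (T.measurable hF)
  have hsub : T.symm ⁻¹' (E ∩ T ⁻¹' F) ⊆ F := fun ω hω => by simpa using hω.2
  have hμ' : μ (T.symm ⁻¹' (E ∩ T ⁻¹' F)) ≠ 0 := by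
    rwa [(hT.symm T).measure_preimage hEF.nullMeasurableSet]
  rw [← hEc.cesaroMean_eq_of_subset (hf.comp (measurable_mulVec M)) hEF hE inter_subset_left hμ,
    ← cesaroMean_symm_preimage hT hA hf hEF hAEF,
    hFc.cesaroMean_eq_of_subset hf (T.symm.measurable hEF) hF hsub hμ']

end CesaroMean

theorem exists_ae_eq_const_of_prod_absolutelyContinuous {α β γ δ : Type*} [MeasurableSpace α]
    [MeasurableSpace β] [MeasurableSpace γ] [MeasurableSpace δ] [MeasurableEq δ] [Nonempty δ]
    {μ : Measure α} [IsFiniteMeasure μ] {X : α → β} {Y : α → γ} {f : β → δ} {g : γ → δ}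
    (hX : Measurable X) (hY : Measurable Y) (hf : Measurable f) (hg : Measurable g)
    (hac : (μ.map X).prod (μ.map Y) ≪ μ.map fun ω => (X ω, Y ω)) (hfg : f ∘ X =ᵐ[μ] g ∘ Y) :
    ∃ c, g ∘ Y =ᵐ[μ] fun _ => c := by
  rcases eq_or_ne μ 0 with rfl | hμ
  · exact ⟨Classical.arbitrary δ, rfl⟩
  have hprod : ∀ᵐ p ∂(μ.map X).prod (μ.map Y), f p.1 = g p.2 :=
    hac.ae_le ((ae_map_iff (hX.prodMk hY).aemeasurable
      (measurableSet_eq_fun (hf.comp measurable_fst) (hg.comp measurable_snd))).2 hfg)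
  have : NeBot (ae (μ.map X)) := ae_neBot.2 ((Measure.map_ne_zero_iff hX.aemeasurable).2 hμ)
  obtain ⟨x, hx⟩ := (Measure.ae_ae_of_ae_prod hprod).exists
  exact ⟨f x, (ae_of_ae_map hY.aemeasurable hx).mono fun _ => Eq.symm⟩

section LocalProduct

variable {ℓ : ℕ} {W : Set (ℕ × ℕ)} {ω ω' : ℤ → ℕ}

lemma measurable_projMinus : Measurable projMinus :=
  measurable_pi_lambda _ fun _ => measurable_pi_apply _

lemma measurable_projPlus : Measurable projPlus :=
  measurable_pi_lambda _ fun _ => measurable_pi_apply _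

lemma measurableSet_coord_eq (n : ℤ) (j : ℕ) : MeasurableSet {ω : ℤ → ℕ | ω n = j} :=
  measurableSet_eq_fun (measurable_pi_apply n) measurable_const

lemma measurableSet_SFT (ℓ : ℕ) (W : Set (ℕ × ℕ)) : MeasurableSet (SFT ℓ W) := by
  have hletter : Measurable fun j : ℕ => 1 ≤ j ∧ j ≤ ℓ := .of_discrete
  have hW : Measurable fun p : ℕ × ℕ => p ∈ W := .of_discrete
  exact measurableSet_setOfPred.2 (.and (.forall fun n => hletter.comp (measurable_pi_apply n))
    (.forall fun n => hW.comp ((measurable_pi_apply n).prodMk (measurable_pi_apply (n + 1)))))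

/-- The bi-infinite sequence with past `p.1` and future `p.2`; its letter at `0` is read off the
future. -/
def glue (p : (ℕ → ℕ) × (ℕ → ℕ)) (n : ℤ) : ℕ := if 0 ≤ n then p.2 n.toNat else p.1 (-n).toNat

lemma measurable_glue : Measurable glue := by
  refine measurable_pi_lambda _ fun n => ?_
  unfold glue
  split_ifs <;> fun_prop

lemma glue_of_nonneg {n : ℤ} (hn : 0 ≤ n) : glue (projMinus ω, projPlus ω') n = ω' n := by
  simp only [glue, if_pos hn, projPlus, Int.toNat_of_nonneg hn]

lemma glue_of_nonpos (h : ω 0 = ω' 0) {n : ℤ} (hn : n ≤ 0) :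
    glue (projMinus ω, projPlus ω') n = ω n := by
  rcases hn.eq_or_lt with rfl | hn
  · rw [glue_of_nonneg le_rfl, h]
  · simp only [glue, if_neg hn.not_ge, projMinus, Int.toNat_of_nonneg (neg_nonneg.2 hn.le), neg_neg]

lemma pairProj_glue (h : ω 0 = ω' 0) :
    pairProj (glue (projMinus ω, projPlus ω')) = (projMinus ω, projPlus ω') :=
  Prod.ext (funext fun n => glue_of_nonpos h (neg_nonpos.2 n.cast_nonneg))
    (funext fun n => glue_of_nonneg (ω := ω) (ω' := ω') n.cast_nonneg)

lemma glue_mem_SFT (hω : ω ∈ SFT ℓ W) (hω' : ω' ∈ SFT ℓ W) (h : ω 0 = ω' 0) :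
    glue (projMinus ω, projPlus ω') ∈ SFT ℓ W := by
  refine ⟨fun n => ?_, fun n => ?_⟩
  · rcases le_total 0 n with hn | hn
    · rw [glue_of_nonneg hn]
      exact hω'.1 n
    · rw [glue_of_nonpos h hn]
      exact hω.1 n
  · rcases lt_or_ge n 0 with hn | hn
    · rw [glue_of_nonpos h hn.le, glue_of_nonpos h (by omega)]
      exact hω.2 n
    · rw [glue_of_nonneg hn, glue_of_nonneg (by omega)]
      exact hω'.2 n

variable {μ : Measure (ℤ → ℕ)} [IsFiniteMeasure μ] {j : ℕ}

lemma map_projMinus_restrict (μ : Measure (ℤ → ℕ)) (j : ℕ) :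
    (μ.map projMinus).restrict {a | a 0 = j} = (μ.restrict {ω | ω 0 = j}).map projMinus :=
  Measure.restrict_map measurable_projMinus
    (measurableSet_eq_fun (measurable_pi_apply 0) measurable_const)

lemma map_projPlus_restrict (μ : Measure (ℤ → ℕ)) (j : ℕ) :
    (μ.map projPlus).restrict {a | a 0 = j} = (μ.restrict {ω | ω 0 = j}).map projPlus :=
  Measure.restrict_map measurable_projPlus
    (measurableSet_eq_fun (measurable_pi_apply 0) measurable_const)

lemma LocalProductStructure.prod_absolutelyContinuous (hlps : LocalProductStructure ℓ W μ)
    (hμ : ∀ᵐ ω ∂μ, ω ∈ SFT ℓ W) (hj : j ∈ Icc 1 ℓ) :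
    ((μ.restrict {ω | ω 0 = j}).map projMinus).prod ((μ.restrict {ω | ω 0 = j}).map projPlus) ≪
      (μ.restrict {ω | ω 0 = j}).map pairProj := by
  obtain ⟨ψ, hψ, hloc⟩ := hlps
  obtain ⟨hint, hmap⟩ := hloc j hj.1 hj.2
  rw [map_projMinus_restrict, map_projPlus_restrict] at hint hmap
  rw [hmap]
  refine withDensity_absolutelyContinuous' hint.aemeasurable.ennreal_ofReal ?_
  have hj_ae : ∀ᵐ ω ∂μ.restrict {ω | ω 0 = j}, ω ∈ SFT ℓ W ∧ ω 0 = j :=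
    (ae_restrict_of_ae hμ).and (ae_restrict_mem (measurableSet_coord_eq 0 j))
  have hglue : ∀ᵐ p ∂((μ.restrict {ω | ω 0 = j}).map projMinus).prod
      ((μ.restrict {ω | ω 0 = j}).map projPlus), glue p ∈ SFT ℓ W ∧ pairProj (glue p) = p := by
    rw [Measure.map_prod_map _ _ measurable_projMinus measurable_projPlus]
    refine (ae_map_iff (measurable_projMinus.prodMap measurable_projPlus).aemeasurable ?_).2 ?_
    · exact (measurable_glue (measurableSet_SFT ℓ W)).inter (measurableSet_eq_fun
        ((measurable_projMinus.prodMk measurable_projPlus).comp measurable_glue) measurable_id)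
    · filter_upwards [Measure.quasiMeasurePreserving_fst.ae hj_ae,
        Measure.quasiMeasurePreserving_snd.ae hj_ae] with p hp hp'
      have h := hp.2.trans hp'.2.symm
      exact ⟨glue_mem_SFT hp.1 hp'.1 h, pairProj_glue h⟩
  filter_upwards [hglue] with p hp
  simpa only [hp.2, ne_eq, ENNReal.ofReal_eq_zero, not_le] using hψ _ hp.1

end LocalProduct

lemma exists_condExp_eq_comp {α β : Type*} [MeasurableSpace α] [mβ : MeasurableSpace β]
    (μ : Measure α) (X : α → β) (u : α → ℝ) :
    ∃ h : β → ℝ, Measurable h ∧ μ[u | mβ.comap X] = h ∘ X := by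
  obtain ⟨h, hh, heq⟩ :=
    (stronglyMeasurable_condExp (μ := μ) (f := u) (m := mβ.comap X)).exists_eq_measurable_comp
  exact ⟨h, hh.measurable, heq⟩

section Shift

/-- The shift as an invertible measurable transformation of the space of all sequences. -/
def shiftEquiv : (ℤ → ℕ) ≃ᵐ (ℤ → ℕ) where
  toFun := shift
  invFun ω n := ω (n - 1)
  left_inv ω := funext fun n => congrArg ω (sub_add_cancel n 1)
  right_inv ω := funext fun n => congrArg ω (add_sub_cancel_right n 1)
  measurable_toFun := measurable_pi_lambda _ fun _ => measurable_pi_apply _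
  measurable_invFun := measurable_pi_lambda _ fun _ => measurable_pi_apply _

lemma iterate_shiftEquiv_symm_apply (n : ℕ) (ω : ℤ → ℕ) (a : ℤ) :
    shiftEquiv.symm^[n] ω a = ω (a - n) := by
  induction n generalizing a with
  | zero => simp
  | succ n ih =>
    rw [Function.iterate_succ_apply']
    exact (ih (a - 1)).trans (congrArg ω (by push_cast; ring))

/-- The matrix cocycle over the shift whose value at `ω` is attached to the transition from `ω 0`
to `ω 1`. -/
def letterCocycle (B : ℕ → ℕ → Matrix (Fin 2) (Fin 2) ℝ) (ω : ℤ → ℕ) : Matrix (Fin 2) (Fin 2) ℝ :=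
  B (ω 0) (ω 1)

variable {B : ℕ → ℕ → Matrix (Fin 2) (Fin 2) ℝ}

lemma stronglyMeasurable_comp_letters {α : Type*} {𝒢 : MeasurableSpace α}
    (B : ℕ → ℕ → Matrix (Fin 2) (Fin 2) ℝ) {a b : α → ℕ} (ha : Measurable[𝒢] a)
    (hb : Measurable[𝒢] b) :
    StronglyMeasurable[𝒢] fun ω => B (a ω) (b ω) :=
  (StronglyMeasurable.of_discrete (f := Function.uncurry B)).comp_measurable (ha.prodMk hb)

lemma bddSL2_letterCocycle (hdet : ∀ i j, (B i j).det = 1) (hbdd : ∃ K, ∀ i j, ‖B i j‖ ≤ K) :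
    BddSL2 (letterCocycle B) where
  det_eq_one _ := hdet _ _
  stronglyMeasurable :=
    stronglyMeasurable_comp_letters B (measurable_pi_apply (0 : ℤ)) (measurable_pi_apply (1 : ℤ))
  bounded := hbdd.imp fun _ hK _ => hK _ _

lemma measurable_comap_projPlus (n : ℕ) :
    Measurable[MeasurableSpace.pi.comap projPlus] fun ω : ℤ → ℕ => ω n :=
  (measurable_pi_apply n).comp (comap_measurable projPlus)

lemma measurable_comap_projMinus (n : ℕ) :
    Measurable[MeasurableSpace.pi.comap projMinus] fun ω : ℤ → ℕ => ω (-n) :=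
  (measurable_pi_apply n).comp (comap_measurable projMinus)

lemma isFactorAlgebra_future (B : ℕ → ℕ → Matrix (Fin 2) (Fin 2) ℝ) :
    IsFactorAlgebra (MeasurableSpace.pi.comap projPlus) shiftEquiv (letterCocycle B) where
  le := measurable_projPlus.comap_le
  comap_le := by
    rw [MeasurableSpace.comap_comp]
    refine Measurable.comap_le (@measurable_pi_lambda _ _ _ (_) _ _ fun n => ?_)
    exact measurable_comap_projPlus (n + 1)
  stronglyMeasurable := stronglyMeasurable_comp_letters B (measurable_comap_projPlus 0)
    (measurable_comap_projPlus 1)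

lemma isFactorAlgebra_past (B : ℕ → ℕ → Matrix (Fin 2) (Fin 2) ℝ) :
    IsFactorAlgebra (MeasurableSpace.pi.comap projMinus) shiftEquiv.symm
      (letterCocycle B ∘ shiftEquiv.symm) where
  le := measurable_projMinus.comap_le
  comap_le := by
    rw [MeasurableSpace.comap_comp]
    refine Measurable.comap_le (@measurable_pi_lambda _ _ _ (_) _ _ fun n => ?_)
    have h := measurable_comap_projMinus (n + 1)
    rw [Nat.cast_succ, neg_add'] at h
    exact h
  stronglyMeasurable := stronglyMeasurable_comp_letters B (measurable_comap_projMinus 1)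
    (measurable_comap_projMinus 0)

lemma iSup_comap_projPlus_eq :
    ⨆ i, (MeasurableSpace.pi.comap projPlus).comap shiftEquiv.symm^[i] = MeasurableSpace.pi := by
  refine le_antisymm (iSup_le fun i => ?_) (iSup_le fun a => le_iSup_of_le a.natAbs ?_)
  · exact (MeasurableSpace.comap_mono measurable_projPlus.comap_le).trans
      (shiftEquiv.symm.measurable.iterate i).comap_le
  · have ha : (fun ω : ℤ → ℕ => ω a) =
        (fun x => x (a + a.natAbs).toNat) ∘ projPlus ∘ shiftEquiv.symm^[a.natAbs] := by
      funext ω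
      rw [Function.comp_apply, Function.comp_apply, projPlus, iterate_shiftEquiv_symm_apply]
      congr 1
      omega
    rw [ha, ← MeasurableSpace.comap_comp, ← MeasurableSpace.comap_comp]
    exact MeasurableSpace.comap_mono (MeasurableSpace.comap_mono (measurable_pi_apply _).comap_le)

variable {ℓ j : ℕ} {W : Set (ℕ × ℕ)} {μ : Measure (ℤ → ℕ)} [IsProbabilityMeasure μ]

theorem LocalProductStructure.constCesaroLimitOn (hlps : LocalProductStructure ℓ W μ)
    (hμ : ∀ᵐ ω ∂μ, ω ∈ SFT ℓ W) (hT : MeasurePreserving shift μ μ)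
    (hB : BddSL2 (letterCocycle B)) (hL : NonposLyapunov shiftEquiv (letterCocycle B) μ)
    (hj : j ∈ Icc 1 ℓ) : ConstCesaroLimitOn shiftEquiv (letterCocycle B) μ {ω | ω 0 = j} := by
  intro f hf
  obtain ⟨u, hu⟩ := exists_isWeakLimit_cesaroAvg (μ := μ) (T := shiftEquiv) hB hf
  have hpast : u =ᵐ[μ] μ[u | MeasurableSpace.pi.comap projMinus] :=
    IsWeakLimit.ae_eq_condExp (isFactorAlgebra_past B).le hu (bddMeas_cesaroAvg hB hf)
      (measurable_cesaroAvg (isFactorAlgebra_past B) hf.measurable)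
  have hfuture : u =ᵐ[μ] μ[u | MeasurableSpace.pi.comap projPlus] :=
    hu.ae_eq_condExp_of_nonposLyapunov hT hB hL (isFactorAlgebra_future B)
      iSup_comap_projPlus_eq hf
  obtain ⟨p, hp, hup⟩ := exists_condExp_eq_comp μ projMinus u
  obtain ⟨q, hq, huq⟩ := exists_condExp_eq_comp μ projPlus u
  rw [hup] at hpast
  rw [huq] at hfuture
  obtain ⟨c, hc⟩ := exists_ae_eq_const_of_prod_absolutelyContinuous measurable_projMinus
    measurable_projPlus hp hq (hlps.prod_absolutelyContinuous hμ hj)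
    (ae_restrict_of_ae (hpast.symm.trans hfuture))
  exact ⟨u, c, hu, EventuallyEq.trans (ae_restrict_of_ae hfuture) hc⟩

end Shift

section LetterMat

variable {ℓ i j : ℕ} {W : Set (ℕ × ℕ)} {k : ℝ} {ω : ℤ → ℕ}

open Classical in
/-- The matrix attached to the transition from `i` to `j`, extended by `1` to pairs outside the
alphabet so that the resulting cocycle is bounded in `SL(2, ℝ)` on all sequences. -/
noncomputable def letterMat (ℓ : ℕ) (k : ℝ) (i j : ℕ) : Matrix (Fin 2) (Fin 2) ℝ :=
  if i ∈ Icc 1 ℓ ∧ j ∈ Icc 1 ℓ then transferMat k i j else 1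

lemma letterMat_of_mem (hi : i ∈ Icc 1 ℓ) (hj : j ∈ Icc 1 ℓ) :
    letterMat ℓ k i j = transferMat k i j :=
  if_pos ⟨hi, hj⟩

lemma det_letterMat (ℓ : ℕ) (k : ℝ) (i j : ℕ) : (letterMat ℓ k i j).det = 1 := by
  unfold letterMat
  split_ifs with h
  · exact det_transferMat k (Nat.cast_pos.2 h.1.1) (Nat.cast_pos.2 h.2.1)
  · exact det_one

lemma exists_norm_letterMat_le (ℓ : ℕ) (k : ℝ) : ∃ K, ∀ i j, ‖letterMat ℓ k i j‖ ≤ K := by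
  obtain ⟨K, hK⟩ := ((finite_Icc 1 ℓ).image2 (fun i j => ‖transferMat k (i : ℕ) (j : ℕ)‖)
    (finite_Icc 1 ℓ)).bddAbove
  refine ⟨max K ‖(1 : Matrix (Fin 2) (Fin 2) ℝ)‖, fun i j => ?_⟩
  unfold letterMat
  split_ifs with h
  · exact le_max_of_le_left (hK (mem_image2_of_mem h.1 h.2))
  · exact le_max_right _ _

lemma bddSL2_letterCocycle_letterMat (ℓ : ℕ) (k : ℝ) : BddSL2 (letterCocycle (letterMat ℓ k)) :=
  bddSL2_letterCocycle (det_letterMat ℓ k) (exists_norm_letterMat_le ℓ k)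

lemma shift_mem_SFT (hω : ω ∈ SFT ℓ W) : shift ω ∈ SFT ℓ W :=
  ⟨fun n => hω.1 (n + 1), fun n => hω.2 (n + 1)⟩

lemma Acoc_shift (hω : ω ∈ SFT ℓ W) : Acoc k (shift ω) = letterCocycle (letterMat ℓ k) ω := by
  rw [letterCocycle, letterMat_of_mem (hω.1 0) (hω.1 1)]
  rfl

lemma AIter_shift (hω : ω ∈ SFT ℓ W) (n : ℕ) :
    AIter k (shift ω) n = cocycleProd shiftEquiv (letterCocycle (letterMat ℓ k)) n ω := by
  induction n with
  | zero => rfl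
  | succ n ih =>
    have hmem : shift^[n] ω ∈ SFT ℓ W := MapsTo.iterate (fun _ => shift_mem_SFT) n hω
    rw [AIter, cocycleProd, ih, ← Function.iterate_succ_apply, Function.iterate_succ_apply',
      Acoc_shift hmem]
    rfl

variable {μ : Measure (ℤ → ℕ)}

lemma FullSupport.measure_word_ne_zero (hsupp : FullSupport ℓ W μ)
    (hword : ∃ ω ∈ SFT ℓ W, ∃ n : ℤ, ω n = i ∧ ω (n + 1) = j) :
    μ {ω | ω 0 = i ∧ ω 1 = j} ≠ 0 := by
  obtain ⟨ω, hω, n, hi, hj⟩ := hword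
  have hletters : Continuous fun ω : ℤ → ℕ => (ω 0, ω 1) := by fun_prop
  have hopen : IsOpen {ω : ℤ → ℕ | ω 0 = i ∧ ω 1 = j} := by
    simpa only [preimage_ofPred_eq, Prod.mk.injEq, ← ofPred_eq_eq_singleton] using
      (isOpen_discrete {(i, j)}).preimage hletters
  refine (hsupp _ hopen ⟨fun m => ω (n + m), ⟨?_, hj⟩,
    fun m => hω.1 (n + m), fun m => ?_⟩).ne'
  · exact (congrArg ω (add_zero n)).trans hi
  · simpa only [add_assoc] using hω.2 (n + m)

lemma mem_Icc_of_measure_word_ne_zero (hμ : ∀ᵐ ω ∂μ, ω ∈ SFT ℓ W)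
    (h : μ {ω | ω 0 = i ∧ ω 1 = j} ≠ 0) : i ∈ Icc 1 ℓ := by
  obtain ⟨ω, ⟨rfl, -⟩, hω⟩ := ((frequently_ae_iff.2 h).and_eventually hμ).exists
  exact hω.1 0

variable [IsProbabilityMeasure μ]

lemma integral_log_norm_AIter (hμ : ∀ᵐ ω ∂μ, ω ∈ SFT ℓ W) (hT : MeasurePreserving shift μ μ)
    (k : ℝ) (n : ℕ) :
    ∫ ω, log (2 * ‖cocycleProd shiftEquiv (letterCocycle (letterMat ℓ k)) n ω‖) ∂μ =
      log 2 + ∫ ω, log ‖AIter k ω n‖ ∂μ := by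
  have hP := (bddSL2_letterCocycle_letterMat ℓ k).cocycleProd shiftEquiv.measurable n
  have hlog : ∀ᵐ ω ∂μ, log ‖AIter k (shiftEquiv ω) n‖ =
      log (2 * ‖cocycleProd shiftEquiv (letterCocycle (letterMat ℓ k)) n ω‖) - log 2 := by
    filter_upwards [hμ] with ω hω
    have hpos := one_le_two_mul_norm (hP.det_eq_one ω)
    rw [log_mul two_ne_zero (by linarith), add_sub_cancel_left, ← AIter_shift hω]
    rfl
  have hT' : MeasurePreserving shiftEquiv μ μ := hT
  rw [← hT'.integral_comp' fun ω => log ‖AIter k ω n‖, integral_congr_ae hlog,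
    integral_sub (hP.log_norm.integrable μ) (integrable_const _), integral_const, probReal_univ,
    one_smul, add_sub_cancel]

lemma nonposLyapunov_letterCocycle (hμ : ∀ᵐ ω ∂μ, ω ∈ SFT ℓ W) (hT : MeasurePreserving shift μ μ)
    {L : ℝ} (hL : Tendsto (fun n : ℕ => (1 / (n : ℝ)) * ∫ ω, log ‖AIter k ω n‖ ∂μ) atTop (𝓝 L))
    (hL₀ : L ≤ 0) : NonposLyapunov shiftEquiv (letterCocycle (letterMat ℓ k)) μ := by
  refine ⟨L, hL₀, ?_⟩
  have hlog2 : Tendsto (fun n : ℕ => (n : ℝ)⁻¹ * log 2) atTop (𝓝 0) := by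
    simpa only [zero_mul] using tendsto_inv_atTop_nhds_zero_nat.mul_const (log 2)
  simpa only [integral_log_norm_AIter hμ hT, mul_add, one_div, zero_add] using hlog2.add hL

variable (ℓ k μ) in
/-- The mean on the plane that limits of Cesàro averages of the cocycle attach to the letter `i`. -/
noncomputable def letterMean (i : ℕ) : ((Fin 2 → ℝ) → ℝ) → ℝ :=
  cesaroMean shiftEquiv (letterCocycle (letterMat ℓ k)) μ {ω | ω 0 = i}

lemma isMean_letterMean (h : μ {ω | ω 0 = i} ≠ 0) : IsMean (letterMean ℓ k μ i) :=
  isMean_cesaroMean (bddSL2_letterCocycle_letterMat ℓ k) (measurableSet_coord_eq 0 i) h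

lemma letterMean_comp_transferMat (hμ : ∀ᵐ ω ∂μ, ω ∈ SFT ℓ W) (hT : MeasurePreserving shift μ μ)
    (hlps : LocalProductStructure ℓ W μ)
    (hL : NonposLyapunov shiftEquiv (letterCocycle (letterMat ℓ k)) μ)
    (hi : i ∈ Icc 1 ℓ) (hj : j ∈ Icc 1 ℓ) (hij : μ {ω | ω 0 = i ∧ ω 1 = j} ≠ 0)
    {f : (Fin 2 → ℝ) → ℝ} (hf : BddMeas f) :
    letterMean ℓ k μ i (fun v => f (transferMat k i j *ᵥ v)) = letterMean ℓ k μ j f := by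
  have hA := bddSL2_letterCocycle_letterMat ℓ k
  refine cesaroMean_comp_mulVec hT hA hf (measurableSet_coord_eq 0 i) (measurableSet_coord_eq 0 j)
    (hlps.constCesaroLimitOn hμ hT hA hL hi) (hlps.constCesaroLimitOn hμ hT hA hL hj) ?_ hij
  rintro ω ⟨rfl, rfl⟩
  exact letterMat_of_mem hi hj

theorem statement5_general (hμ : ∀ᵐ ω ∂μ, ω ∈ SFT ℓ W) (hT : MeasurePreserving shift μ μ)
    (hlps : LocalProductStructure ℓ W μ) (hne : i ≠ j) (hii : μ {ω | ω 0 = i ∧ ω 1 = i} ≠ 0)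
    (hij : μ {ω | ω 0 = i ∧ ω 1 = j} ≠ 0) (hji : μ {ω | ω 0 = j ∧ ω 1 = i} ≠ 0)
    (hk : sin (2 * k) ≠ 0) {L : ℝ}
    (hL : Tendsto (fun n : ℕ => (1 / (n : ℝ)) * ∫ ω, log ‖AIter k ω n‖ ∂μ) atTop (𝓝 L)) :
    0 < L := by
  by_contra! hL₀
  have hL' := nonposLyapunov_letterCocycle hμ hT hL hL₀
  have hi := mem_Icc_of_measure_word_ne_zero hμ hii
  have hj := mem_Icc_of_measure_word_ne_zero hμ hji
  have hmean : IsMean (letterMean ℓ k μ i) :=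
    isMean_letterMean fun h => hii (measure_mono_null (fun ω hω => hω.1) h)
  have hinv_ii : InvariantUnder (letterMean ℓ k μ i) (transferMat k i i) := fun f hf =>
    letterMean_comp_transferMat hμ hT hlps hL' hi hi hii hf
  have hinv_iji : InvariantUnder (letterMean ℓ k μ i) (transferMat k j i * transferMat k i j) :=
    fun f hf => by
      simp only [← mulVec_mulVec]
      rw [letterMean_comp_transferMat hμ hT hlps hL' hi hj hij (hf.comp (measurable_mulVec _)),
        letterMean_comp_transferMat hμ hT hlps hL' hj hi hji hf]
  exact hne (Nat.cast_injective (hmean.eq_of_invariantUnder_transferMat hk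
    (Nat.cast_pos.2 hi.1) (Nat.cast_pos.2 hj.1) hinv_ii hinv_iji))

end LetterMat

section Trigonometry

lemma sin_two_mul_ne_zero {k : ℝ} (hk : k ∈ Ioo 0 π) (hk2 : k ≠ π / 2) : sin (2 * k) ≠ 0 := by
  intro h
  obtain ⟨n, hn⟩ := sin_eq_zero_iff.1 h
  have hn0 : 0 < n := by
    have : (0 : ℝ) < n := pos_of_mul_pos_left (by linarith [hk.1]) pi_pos.le
    exact_mod_cast this
  have hn2 : n < 2 := by
    have : (n : ℝ) < 2 := lt_of_mul_lt_mul_right (by linarith [hk.2]) pi_pos.le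
    exact_mod_cast this
  obtain rfl : n = 1 := by omega
  exact hk2 (by push_cast at hn; linarith)

lemma pos_and_zeros_subset {L : ℝ → ℝ} (hL : ∀ k, sin (2 * k) ≠ 0 → 0 < L k) :
    (∀ k ∈ Ioo (0 : ℝ) π, k ≠ π / 2 → 0 < L k) ∧
      {k ∈ Icc (0 : ℝ) π | L k = 0} ⊆ {0, π / 2, π} := by
  have hpos : ∀ k ∈ Ioo (0 : ℝ) π, k ≠ π / 2 → 0 < L k := fun k hk hk2 =>
    hL k (sin_two_mul_ne_zero hk hk2)
  refine ⟨hpos, fun k ⟨⟨hk0, hkπ⟩, hLk⟩ => ?_⟩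
  by_contra! hk
  simp only [mem_insert_iff, mem_singleton_iff, not_or] at hk
  exact (hpos k ⟨hk0.lt_of_ne' hk.1, hkπ.lt_of_ne hk.2.2⟩ hk.2.1).ne' hLk

end Trigonometry

/-- Suppose `μ` is a shift-ergodic Borel probability measure on `Ω` with a local
product structure and full support, and there are two distinct letters `j₀ ≠ j₁`
in `𝒜` such that each of the two-letter words `(j₀,j₀)`, `(j₀,j₁)`, `(j₁,j₀)`
occurs in at least one element of `Ω`.  Then `L(A^{(k)}, μ) > 0` for every
`k ∈ (0,π)` with `k ≠ π/2`; equivalently,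
`{k ∈ [0,π] : L(A^{(k)}, μ) = 0} ⊆ {0, π/2, π}`. -/
theorem statement5 (ℓ : ℕ) (hℓ : 1 < ℓ) (W : Set (ℕ × ℕ))
    (μ : Measure (ℤ → ℕ)) [IsProbabilityMeasure μ]
    (hconc : μ (SFT ℓ W)ᶜ = 0)
    (herg : Ergodic shift μ)
    (hlps : LocalProductStructure ℓ W μ)
    (hsupp : FullSupport ℓ W μ)
    (hwords : ∃ j₀ j₁ : ℕ, j₀ ≠ j₁ ∧
      1 ≤ j₀ ∧ j₀ ≤ ℓ ∧ 1 ≤ j₁ ∧ j₁ ≤ ℓ ∧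
      (∃ ω ∈ SFT ℓ W, ∃ n : ℤ, ω n = j₀ ∧ ω (n + 1) = j₀) ∧
      (∃ ω ∈ SFT ℓ W, ∃ n : ℤ, ω n = j₀ ∧ ω (n + 1) = j₁) ∧
      (∃ ω ∈ SFT ℓ W, ∃ n : ℤ, ω n = j₁ ∧ ω (n + 1) = j₀))
    (L : ℝ → ℝ)
    (hL : ∀ k : ℝ,
      Tendsto (fun n : ℕ => (1 / (n : ℝ)) * ∫ ω, Real.log ‖AIter k ω n‖ ∂μ)
        atTop (𝓝 (L k))) :
    (∀ k ∈ Ioo (0 : ℝ) π, k ≠ π / 2 → 0 < L k) ∧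
    {k ∈ Icc (0 : ℝ) π | L k = 0} ⊆ {0, π / 2, π} := by
  obtain ⟨j₀, j₁, hne, -, -, -, -, h₀₀, h₀₁, h₁₀⟩ := hwords
  exact pos_and_zeros_subset fun k hk => statement5_general (mem_ae_iff.2 hconc)
    herg.toMeasurePreserving hlps hne (hsupp.measure_word_ne_zero h₀₀)
    (hsupp.measure_word_ne_zero h₀₁) (hsupp.measure_word_ne_zero h₁₀) hk (hL k)
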